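/- arXiv:1405.0993 — 3 statements merged into one kernel-verified Lean document; each statement's English description precedes it below -/
import Mathlib

section
/- Let R be a commutative ring and n, d ∈ ℕ with n, d ≥ 1, and let X be an (n+d)×(n+1) matrix over R. Then ν^d(μ(X)) is a square matrix of order C(n+d, n), and det(ν^d(μ(X))) = (μ'(X))^n. -/
/-!
The identity holds for all `n, d ≥ 0` and is proved by induction on the number `m = n + d` of rows,
the cases `n = 0` and `d = 0` being trivial.

Geometrically, the rows of `X` are hyperplanes and the row of `μ X` at `s` is the point `p_s` where
the hyperplanes in `s` meet. Let `ℓ = ∑ (-1)^j X_{0j} x_j` be the form of row `0`, so that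
`ℓ(p_s)` is the maximal minor on `{0} ∪ s` if `0 ∉ s` (`form_mu_tailRows`), and `ℓ(p_s) = 0` if
`0 ∈ s` (`form_mu_takeZero`). Replacing each monomial `x_0 g` by `ℓ g` is a triangular column
operation of determinant a power of `X_{00}` (`det_columnOps`). It makes the matrix block upper
triangular for the splitting of the `s` by `0 ∈ s` and of the monomials by `x_0`-divisibility
(`veronese_mul_columnOps`):

* the block of `s ∌ 0` and `x_0 g` is the matrix for `(n, d - 1)` and the rows `1, …, m - 1` of `X`,
  its rows scaled by the maximal minors on `{0} ∪ s`;
* the block of `s ∋ 0` and the monomials without `x_0` is, up to a power of `X_{00}`, the matrix for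
  `(n - 1, d)` and the matrix obtained from `X` by Gaussian elimination of column `0`
  (`mu_takeZero`, `maxMinor_takeZero`).

Both splittings are compatible with the prescribed orders (`glue_strictMono`), so no sign arises.
Counting powers of `X_{00}` gives the identity when `X_{00}` is a nonzero element of a field
(`det_veronese_glue`). This covers the generic matrix over the fraction field of
`ℤ[X_{ij}]`, and every matrix over a commutative ring is a specialization of the generic one
(`Generic.specialize`).
-/

instance (priority := high) (m : ℕ) : WellFoundedLT (Fin m) := inferInstance

/-- The index type for monomials of total degree `d` in the `n + 1` variables
`X 0, …, X n`: exponent vectors summing to `d`. -/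
def MonIdx (n d : ℕ) : Type := {f : Fin (n + 1) → ℕ // ∑ i, f i = d}

instance (n d : ℕ) : DecidableEq (MonIdx n d) :=
  inferInstanceAs (DecidableEq {f : Fin (n + 1) → ℕ // ∑ i, f i = d})

instance (n d : ℕ) : Fintype (MonIdx n d) :=
  Fintype.subtype (Finset.Nat.antidiagonalTuple (n + 1) d) fun _ =>
    Finset.Nat.mem_antidiagonalTuple

/-- Monomials of total degree `d` are ordered by *inverting* the lexicographic order on
their exponent sequences, so that `X 0 ^ d` comes first. -/
noncomputable instance (n d : ℕ) : LinearOrder (MonIdx n d) :=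
  LinearOrder.lift'
    (fun f : {f : Fin (n + 1) → ℕ // ∑ i, f i = d} => OrderDual.toDual (toLex f.1))
    (fun f g h => Subtype.ext (by simpa using h))

/-- The index type for the rows of `μ X`: subsets of `Fin m` of cardinality `n`,
ordered by the lexicographic order on the increasing sequences of *omitted* rows
(equivalently, lexicographically by indicator functions). -/
def OmitIdx (m n : ℕ) : Type := {s : Finset (Fin m) // s.card = n}

instance (m n : ℕ) : DecidableEq (OmitIdx m n) :=
  inferInstanceAs (DecidableEq {s : Finset (Fin m) // s.card = n})

instance (m n : ℕ) : Fintype (OmitIdx m n) :=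
  inferInstanceAs (Fintype {s : Finset (Fin m) // s.card = n})

noncomputable instance (m n : ℕ) : LinearOrder (OmitIdx m n) :=
  LinearOrder.lift'
    (fun s : {s : Finset (Fin m) // s.card = n} => toLex fun i : Fin m => decide (i ∈ s.1))
    (fun s t h => Subtype.ext (Finset.ext fun i => by
      have h' := congrFun ((toLex (α := Fin m → Bool)).injective h) i
      simpa [decide_eq_decide] using h'))

/-- The Veronese map `ν^d : R^{n+1} → R^{C(n+d,n)}`, sending a vector to the values at it
of all monomials of total degree `d`. -/
def nu {R : Type*} [CommRing R] {n : ℕ} (d : ℕ) (x : Fin (n + 1) → R) (f : MonIdx n d) : R :=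
  ∏ i, x i ^ f.1 i

/-- `μ X` : the `C(m,n) × (n+1)` matrix of all `n × n` minors of `X`.  The `(s, j)` entry is
the determinant of the submatrix of `X` with rows the elements of `s` (in increasing order)
and all columns except column `j` (in increasing order). -/
def mu {R : Type*} [CommRing R] {m n : ℕ} (X : Matrix (Fin m) (Fin (n + 1)) R) :
    Matrix (OmitIdx m n) (Fin (n + 1)) R := fun s j =>
  Matrix.det (Matrix.of fun a b : Fin n =>
    X (s.1.orderIsoOfFin s.2 a) (j.succAbove b))

/-- `μ' X` : the product of all `(n+1) × (n+1)` minors of `X`. -/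
def mu' {R : Type*} [CommRing R] {m n : ℕ} (X : Matrix (Fin m) (Fin (n + 1)) R) : R :=
  ∏ t : {t : Finset (Fin m) // t.card = n + 1},
    Matrix.det (Matrix.of fun a b : Fin (n + 1) => X (t.1.orderIsoOfFin t.2 a) b)

namespace MultivariateVandermonde

open Finset

variable {m n d k : ℕ}

/-! ### Recursive structure of the index sets -/

theorem omit_lt_iff (s t : OmitIdx m k) :
    s < t ↔ ∃ i, (∀ j < i, (j ∈ s.1 ↔ j ∈ t.1)) ∧ i ∉ s.1 ∧ i ∈ t.1 := by
  change (∃ i, (∀ j < i, decide (j ∈ s.1) = decide (j ∈ t.1)) ∧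
    decide (i ∈ s.1) < decide (i ∈ t.1)) ↔ _
  simp [Bool.lt_iff]

theorem mon_lt_iff (f g : MonIdx n d) :
    f < g ↔ ∃ i, (∀ j < i, g.1 j = f.1 j) ∧ g.1 i < f.1 i := Iff.rfl

theorem omit_ext {s t : OmitIdx m k} (h : ∀ i, i ∈ s.1 ↔ i ∈ t.1) : s = t :=
  Subtype.ext (Finset.ext h)

theorem mon_ext {f g : MonIdx n d} (h : ∀ i, f.1 i = g.1 i) : f = g :=
  Subtype.ext (funext h)

/-- The subsets of `Fin (m + 1)` that avoid `0`, seen as subsets of `Fin m`. -/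
def skipZero (s : OmitIdx m k) : OmitIdx (m + 1) k :=
  ⟨s.1.map (Fin.succEmb m), by simpa using s.2⟩

/-- The subsets of `Fin (m + 1)` that contain `0`, seen as subsets of `Fin m`. -/
def takeZero (s : OmitIdx m k) : OmitIdx (m + 1) (k + 1) :=
  ⟨Finset.cons 0 (s.1.map (Fin.succEmb m)) (by simp), by simpa using s.2⟩

@[simp] theorem zero_mem_skipZero (s : OmitIdx m k) : ¬ (0 ∈ (skipZero s).1) := by
  simp [skipZero]

@[simp] theorem succ_mem_skipZero (s : OmitIdx m k) (i : Fin m) :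
    i.succ ∈ (skipZero s).1 ↔ i ∈ s.1 := by
  simp [skipZero]

@[simp] theorem zero_mem_takeZero (s : OmitIdx m k) : 0 ∈ (takeZero s).1 := by
  simp [takeZero]

@[simp] theorem succ_mem_takeZero (s : OmitIdx m k) (i : Fin m) :
    i.succ ∈ (takeZero s).1 ↔ i ∈ s.1 := by
  simp [takeZero]

theorem skipZero_lt {s t : OmitIdx m k} (h : s < t) : skipZero s < skipZero t := by
  rw [omit_lt_iff] at h ⊢
  obtain ⟨i, h1, h2, h3⟩ := h
  refine ⟨i.succ, fun j hj => ?_, by simpa, by simpa⟩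
  cases j using Fin.cases with
  | zero => simp
  | succ j => simpa using h1 j (by simpa using hj)

theorem takeZero_lt {s t : OmitIdx m k} (h : s < t) : takeZero s < takeZero t := by
  rw [omit_lt_iff] at h ⊢
  obtain ⟨i, h1, h2, h3⟩ := h
  refine ⟨i.succ, fun j hj => ?_, by simpa, by simpa⟩
  cases j using Fin.cases with
  | zero => simp
  | succ j => simpa using h1 j (by simpa using hj)

theorem skipZero_lt_takeZero (s : OmitIdx m (k + 1)) (t : OmitIdx m k) :
    skipZero s < takeZero t := by
  rw [omit_lt_iff]
  exact ⟨0, by simp, by simp, by simp⟩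

/-- The `k + 1`-subsets of `Fin (m + 1)`, split according to whether they contain `0`. -/
noncomputable def omitSum (m k : ℕ) :
    OmitIdx m (k + 1) ⊕ OmitIdx m k ≃ OmitIdx (m + 1) (k + 1) :=
  Equiv.ofBijective (Sum.elim skipZero takeZero) (by
    constructor
    · rintro (s | s) (t | t) h
      · refine congrArg _ (Subtype.ext (Finset.ext fun i => ?_))
        rw [← succ_mem_skipZero s, ← succ_mem_skipZero t]
        exact iff_of_eq (congrArg (fun u => i.succ ∈ u.1) h)
      · exact absurd h (skipZero_lt_takeZero s t).ne
      · exact absurd h (skipZero_lt_takeZero t s).ne'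
      · refine congrArg _ (Subtype.ext (Finset.ext fun i => ?_))
        rw [← succ_mem_takeZero s, ← succ_mem_takeZero t]
        exact iff_of_eq (congrArg (fun u => i.succ ∈ u.1) h)
    · intro t
      have key : ∀ u : Finset (Fin (m + 1)), u.card =
          (if 0 ∈ u then 1 else 0) + (univ.filter fun i : Fin m => i.succ ∈ u).card := by
        intro u
        have h := Fin.card_filter_univ_succ (fun i : Fin (m + 1) => i ∈ u)
        simp only [Finset.filter_univ_mem] at h
        rw [h]
        split_ifs <;> simp [add_comm]
      have h := key t.1
      rw [t.2] at h
      by_cases h0 : 0 ∈ t.1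
      · rw [if_pos h0] at h
        refine ⟨Sum.inr ⟨univ.filter fun i : Fin m => i.succ ∈ t.1, by omega⟩, ?_⟩
        refine omit_ext fun i => ?_
        cases i using Fin.cases with
        | zero => exact iff_of_true (zero_mem_takeZero _) h0
        | succ i => exact (succ_mem_takeZero _ i).trans (Finset.mem_filter_univ i)
      · rw [if_neg h0] at h
        refine ⟨Sum.inl ⟨univ.filter fun i : Fin m => i.succ ∈ t.1, by omega⟩, ?_⟩
        refine omit_ext fun i => ?_
        cases i using Fin.cases with
        | zero => exact iff_of_false (zero_mem_skipZero _) h0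
        | succ i => exact (succ_mem_skipZero _ i).trans (Finset.mem_filter_univ i))

@[simp] theorem omitSum_inl (s : OmitIdx m (k + 1)) : omitSum m k (Sum.inl s) = skipZero s := rfl

@[simp] theorem omitSum_inr (s : OmitIdx m k) : omitSum m k (Sum.inr s) = takeZero s := rfl

/-- Multiplication of a monomial by the variable `X j`. -/
def mulVar (j : Fin (n + 1)) (f : MonIdx n d) : MonIdx n (d + 1) :=
  ⟨f.1 + Pi.single j 1, by simp [Finset.sum_add_distrib, f.2]⟩

/-- A monomial in `X 1, …, X (n + 1)`, as a monomial in `X 0, …, X (n + 1)`. -/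
def extendVar (f : MonIdx n d) : MonIdx (n + 1) d :=
  ⟨Fin.cons 0 f.1, by simp [Fin.sum_univ_succ (n := n + 1), f.2]⟩

theorem mulVar_lt (j : Fin (n + 1)) {f g : MonIdx n d} (h : f < g) : mulVar j f < mulVar j g := by
  rw [mon_lt_iff] at h ⊢
  obtain ⟨i, h1, h2⟩ := h
  exact ⟨i, fun j hj => by simp [mulVar, h1 j hj], by simpa [mulVar]⟩

theorem extendVar_lt {f g : MonIdx n d} (h : f < g) : extendVar f < extendVar g := by
  rw [mon_lt_iff] at h ⊢
  obtain ⟨i, h1, h2⟩ := h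
  refine ⟨i.succ, fun j hj => ?_, by simpa [extendVar]⟩
  cases j using Fin.cases with
  | zero => simp [extendVar]
  | succ j => simpa [extendVar] using h1 j (by simpa using hj)

theorem mulVar_lt_extendVar (f : MonIdx (n + 1) d) (g : MonIdx n (d + 1)) :
    mulVar 0 f < extendVar g := by
  rw [mon_lt_iff]
  exact ⟨0, by simp, by simp [mulVar, extendVar]⟩

theorem mulVar_strictMono (j : Fin (n + 1)) : StrictMono (mulVar (d := d) j) :=
  fun _ _ h => mulVar_lt j h

theorem extendVar_strictMono : StrictMono (extendVar (n := n) (d := d)) :=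
  fun _ _ h => extendVar_lt h

/-- This makes the substitution of a linear form for `X 0` triangular: if `X 0 * X^f = X j * X^g`,
then `f` has a smaller exponent of `X 0` than `g`, unless `j = 0` and `f = g`. -/
theorem le_of_mulVar_eq {j : Fin (n + 1)} {f g : MonIdx n d} (h : mulVar 0 f = mulVar j g) :
    g ≤ f := by
  by_cases hj : j = 0
  · subst hj
    exact ((mulVar_strictMono 0).injective h).ge
  · refine le_of_lt ((mon_lt_iff _ _).2 ⟨0, by simp, ?_⟩)
    have := congrArg (fun u => u.1 0) h
    simp [mulVar, Ne.symm hj] at this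
    omega

/-- The monomials of degree `d + 1`, split according to whether `X 0` divides them. -/
noncomputable def monSum (n d : ℕ) :
    MonIdx (n + 1) d ⊕ MonIdx n (d + 1) ≃ MonIdx (n + 1) (d + 1) :=
  Equiv.ofBijective (Sum.elim (mulVar 0) extendVar) (by
    constructor
    · rintro (f | f) (g | g) h
      · exact congrArg _ ((mulVar_strictMono 0).injective h)
      · exact absurd h (mulVar_lt_extendVar f g).ne
      · exact absurd h (mulVar_lt_extendVar g f).ne'
      · exact congrArg _ (extendVar_strictMono.injective h)
    · intro f
      have hf : ∑ i, f.1 i = d + 1 := f.2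
      rw [Fin.sum_univ_succ] at hf
      by_cases h0 : f.1 0 = 0
      · rw [h0, zero_add] at hf
        refine ⟨Sum.inr ⟨fun i => f.1 i.succ, hf⟩, mon_ext fun i => ?_⟩
        cases i using Fin.cases with
        | zero => exact h0.symm
        | succ i => rfl
      · refine ⟨Sum.inl ⟨Fin.cons (f.1 0 - 1) fun i => f.1 i.succ, ?_⟩, mon_ext fun i => ?_⟩
        · rw [Fin.sum_univ_succ]
          simp only [Fin.cons_zero, Fin.cons_succ]
          omega
        · cases i using Fin.cases with
          | zero =>
            change f.1 0 - 1 + 1 = f.1 0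
            omega
          | succ i =>
            change f.1 i.succ + (Pi.single 0 1 : Fin (n + 2) → ℕ) i.succ = f.1 i.succ
            rw [Pi.single_eq_of_ne (Fin.succ_ne_zero i), add_zero])

@[simp] theorem monSum_inl (f : MonIdx (n + 1) d) : monSum n d (Sum.inl f) = mulVar 0 f := rfl

@[simp] theorem monSum_inr (f : MonIdx n (d + 1)) : monSum n d (Sum.inr f) = extendVar f := rfl

/-- Glues bijections between subsets and monomials along the two splittings. -/
noncomputable def glue (e₁ : OmitIdx m (n + 1) ≃ MonIdx (n + 1) d)
    (e₂ : OmitIdx m n ≃ MonIdx n (d + 1)) : OmitIdx (m + 1) (n + 1) ≃ MonIdx (n + 1) (d + 1) :=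
  (omitSum m n).symm.trans ((Equiv.sumCongr e₁ e₂).trans (monSum n d))

theorem glue_strictMono {e₁ : OmitIdx m (n + 1) ≃ MonIdx (n + 1) d}
    {e₂ : OmitIdx m n ≃ MonIdx n (d + 1)} (h₁ : StrictMono e₁) (h₂ : StrictMono e₂) :
    StrictMono (glue e₁ e₂) := by
  intro s t hst
  obtain ⟨s, rfl⟩ := (omitSum m n).surjective s
  obtain ⟨t, rfl⟩ := (omitSum m n).surjective t
  simp only [glue, Equiv.trans_apply, Equiv.symm_apply_apply]
  have mono₁ : StrictMono (skipZero (m := m) (k := n + 1)) := fun _ _ => skipZero_lt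
  have mono₂ : StrictMono (takeZero (m := m) (k := n)) := fun _ _ => takeZero_lt
  rcases s with s | s <;> rcases t with t | t
  · exact mulVar_lt 0 (h₁ (mono₁.lt_iff_lt.1 hst))
  · exact mulVar_lt_extendVar _ _
  · exact absurd hst (skipZero_lt_takeZero t s).not_gt
  · exact extendVar_lt (h₂ (mono₂.lt_iff_lt.1 hst))

theorem glue_symm_inl (e₁ : OmitIdx m (n + 1) ≃ MonIdx (n + 1) d)
    (e₂ : OmitIdx m n ≃ MonIdx n (d + 1)) (p : MonIdx (n + 1) d) :
    (glue e₁ e₂).symm (mulVar 0 p) = skipZero (e₁.symm p) := by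
  rw [← monSum_inl]
  simp only [glue, Equiv.symm_trans_apply, Equiv.symm_symm, Equiv.symm_apply_apply]
  rfl

theorem glue_symm_inr (e₁ : OmitIdx m (n + 1) ≃ MonIdx (n + 1) d)
    (e₂ : OmitIdx m n ≃ MonIdx n (d + 1)) (p : MonIdx n (d + 1)) :
    (glue e₁ e₂).symm (extendVar p) = takeZero (e₂.symm p) := by
  rw [← monSum_inr]
  simp only [glue, Equiv.symm_trans_apply, Equiv.symm_symm, Equiv.symm_apply_apply]
  rfl

/-! ### Minors and their recursion -/

theorem orderIso_skipZero (s : OmitIdx m k) (a : Fin k) :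
    ((skipZero s).1.orderIsoOfFin (skipZero s).2 a : Fin (m + 1)) =
      (s.1.orderIsoOfFin s.2 a : Fin m).succ := by
  have h := Finset.orderEmbOfFin_unique (skipZero s).2
    (f := fun a => (s.1.orderIsoOfFin s.2 a : Fin m).succ) (fun a => by simp)
    (fun a b hab => by simpa using hab)
  rw [Finset.coe_orderIsoOfFin_apply]
  exact (congrFun h a).symm

theorem orderIso_takeZero (s : OmitIdx m k) (a : Fin (k + 1)) :
    ((takeZero s).1.orderIsoOfFin (takeZero s).2 a : Fin (m + 1)) =
      (Fin.cons 0 fun a => (s.1.orderIsoOfFin s.2 a : Fin m).succ : Fin (k + 1) → Fin (m + 1))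
        a := by
  have h := Finset.orderEmbOfFin_unique (takeZero s).2
    (f := (Fin.cons 0 fun a => (s.1.orderIsoOfFin s.2 a : Fin m).succ : Fin (k + 1) → Fin (m + 1)))
    (fun a => by cases a using Fin.cases <;> simp)
    (Fin.strictMono_cons.2 ⟨fun j => by simp, fun a b hab => by simpa using hab⟩)
  rw [Finset.coe_orderIsoOfFin_apply]
  exact (congrFun h a).symm

section CommRing

variable {R : Type*} [CommRing R]

/-- The maximal minor of `X` on the rows in `t`. -/
def maxMinor (X : Matrix (Fin m) (Fin (n + 1)) R) (t : OmitIdx m (n + 1)) : R :=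
  Matrix.det (Matrix.of fun a b : Fin (n + 1) => X (t.1.orderIsoOfFin t.2 a) b)

theorem mu'_eq (X : Matrix (Fin m) (Fin (n + 1)) R) : mu' X = ∏ t, maxMinor X t := rfl

/-- The matrix `X` without its row `0`. -/
def tailRows (X : Matrix (Fin (m + 1)) (Fin k) R) : Matrix (Fin m) (Fin k) R :=
  fun i j => X i.succ j

theorem mu_skipZero (X : Matrix (Fin (m + 1)) (Fin (n + 1)) R) (s : OmitIdx m n) :
    mu X (skipZero s) = mu (tailRows X) s := by
  funext j
  simp only [mu, orderIso_skipZero, tailRows]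

theorem maxMinor_skipZero (X : Matrix (Fin (m + 1)) (Fin (n + 1)) R) (s : OmitIdx m (n + 1)) :
    maxMinor X (skipZero s) = maxMinor (tailRows X) s := by
  simp only [maxMinor, orderIso_skipZero, tailRows]

/-- The linear form with coefficients `(-1) ^ j * X 0 j`. By Laplace expansion, its value at the
vector of minors of `n` rows is the determinant obtained by putting row `0` of `X` on top of these
rows. -/
def form (X : Matrix (Fin (m + 1)) (Fin (n + 1)) R) (y : Fin (n + 1) → R) : R :=
  ∑ j : Fin (n + 1), (-1) ^ (j : ℕ) * X 0 j * y j

theorem form_mu_tailRows (X : Matrix (Fin (m + 1)) (Fin (n + 1)) R) (s : OmitIdx m n) :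
    form X (mu (tailRows X) s) = maxMinor X (takeZero s) := by
  simp only [maxMinor, orderIso_takeZero]
  rw [Matrix.det_succ_row_zero]
  rfl

/-- The intersection point of the hyperplanes in `takeZero s` lies on the hyperplane of row `0`:
the corresponding determinant has its first two rows equal. -/
theorem form_mu_takeZero (X : Matrix (Fin (m + 1)) (Fin (n + 2)) R) (s : OmitIdx m n) :
    form X (mu X (takeZero s)) = 0 := by
  have h : Matrix.det (Matrix.of fun a b : Fin (n + 2) =>
      X ((Fin.cons 0 (Fin.cons 0 fun a => (s.1.orderIsoOfFin s.2 a : Fin m).succ) :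
        Fin (n + 2) → Fin (m + 1)) a) b) = 0 :=
    Matrix.det_zero_of_row_eq (i := 0) (j := 1) (by simp) rfl
  rw [Matrix.det_succ_row_zero] at h
  simp only [form, mu, orderIso_takeZero]
  exact h

theorem nu_mulVar (x : Fin (n + 1) → R) (j : Fin (n + 1)) (f : MonIdx n d) :
    nu (d + 1) x (mulVar j f) = x j * nu d x f := by
  simp only [nu, mulVar, Pi.add_apply, pow_add, Finset.prod_mul_distrib]
  rw [mul_comm]
  congr 1
  rw [Finset.prod_eq_single j] <;> simp +contextual

theorem nu_extendVar (x : Fin (n + 2) → R) (f : MonIdx n d) :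
    nu d x (extendVar f) = nu d (fun j => x j.succ) f := by
  simp [nu, extendVar, Fin.prod_univ_succ (n := n + 1)]

theorem nu_smul (a : R) (x : Fin (n + 1) → R) (f : MonIdx n d) :
    nu d (fun j => a * x j) f = a ^ d * nu d x f := by
  simp only [nu, mul_pow, Finset.prod_mul_distrib, Finset.prod_pow_eq_pow_sum]
  rw [show ∑ i, f.1 i = d from f.2]

theorem mu'_succ (X : Matrix (Fin (m + 1)) (Fin (n + 1)) R) :
    mu' X = mu' (tailRows X) * ∏ s : OmitIdx m n, maxMinor X (takeZero s) := by
  rw [mu'_eq, mu'_eq, ← Equiv.prod_comp (omitSum m n), Fintype.prod_sum_type]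
  simp [maxMinor_skipZero]

end CommRing

/-! ### Elimination of the first column -/

section Field

variable {K : Type*} [Field K]

/-- The rows `1, …, m` of `X` after clearing column `0` with row `0`, and without that column. -/
def eliminate (X : Matrix (Fin (m + 1)) (Fin (n + 2)) K) : Matrix (Fin m) (Fin (n + 1)) K :=
  fun i j => X i.succ j.succ - X i.succ 0 / X 0 0 * X 0 j.succ

theorem det_eliminate (N : Matrix (Fin (k + 1)) (Fin (k + 1)) K) (h : N 0 0 ≠ 0) :
    N.det = N 0 0 * Matrix.det (Matrix.of fun a b : Fin k =>
      N a.succ b.succ - N a.succ 0 / N 0 0 * N 0 b.succ) := by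
  let B : Matrix (Fin (k + 1)) (Fin (k + 1)) K :=
    Fin.cons (N 0) fun a j => N a.succ j - N a.succ 0 / N 0 0 * N 0 j
  have hB : N.det = B.det := by
    refine Matrix.det_eq_of_forall_row_eq_smul_add_const
      (Fin.cons 0 fun a => N a.succ 0 / N 0 0) 0 rfl fun i j => ?_
    cases i using Fin.cases <;> simp [B]
  rw [hB, Matrix.det_succ_column_zero, Fin.sum_univ_succ, Finset.sum_eq_zero]
  · simp only [Fin.val_zero, pow_zero, one_mul, add_zero]
    rfl
  · intro i _
    have : B i.succ 0 = 0 := by simp [B, h]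
    rw [this]
    ring

theorem maxMinor_takeZero (X : Matrix (Fin (m + 1)) (Fin (n + 2)) K) (h : X 0 0 ≠ 0)
    (s : OmitIdx m (n + 1)) :
    maxMinor X (takeZero s) = X 0 0 * maxMinor (eliminate X) s := by
  simp only [maxMinor, orderIso_takeZero]
  rw [det_eliminate _ (by simpa using h)]
  rfl

theorem mu_takeZero (X : Matrix (Fin (m + 1)) (Fin (n + 2)) K) (h : X 0 0 ≠ 0)
    (s : OmitIdx m n) (j : Fin (n + 1)) :
    mu X (takeZero s) j.succ = X 0 0 * mu (eliminate X) s j := by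
  simp only [mu, orderIso_takeZero]
  rw [det_eliminate _ (by simpa using h)]
  simp [eliminate]

end Field

/-! ### The inductive step -/

section Step

variable {R : Type*} [CommRing R]

/-- The matrix `ν^d (μ X)`, made square by a bijection `e` of its index sets. -/
def veronese (e : OmitIdx m n ≃ MonIdx n d) (X : Matrix (Fin m) (Fin (n + 1)) R) :
    Matrix (MonIdx n d) (MonIdx n d) R :=
  Matrix.of fun p q => nu d (mu X (e.symm p)) q

/-- The coefficient of the monomial `f` in the product of `form X` and the monomial `q`. -/
def formCoeff (X : Matrix (Fin (m + 1)) (Fin (n + 1)) R) (f : MonIdx n (d + 1))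
    (q : MonIdx n d) : R :=
  ∑ j : Fin (n + 1), (-1) ^ (j : ℕ) * X 0 j * if f = mulVar j q then 1 else 0

theorem sum_nu_mul_formCoeff (X : Matrix (Fin (m + 1)) (Fin (n + 1)) R) (y : Fin (n + 1) → R)
    (q : MonIdx n d) :
    ∑ f, nu (d + 1) y f * formCoeff X f q = form X y * nu d y q := by
  simp only [formCoeff, Finset.mul_sum, form, Finset.sum_mul]
  rw [Finset.sum_comm]
  refine Finset.sum_congr rfl fun j _ => ?_
  rw [Finset.sum_eq_single (mulVar j q)]
  · rw [nu_mulVar]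
    simp only [if_true]
    ring
  · intro f _ hf
    simp [hf]
  · simp

/-- Column operations: on the columns of the monomials divisible by `X 0`, replace `X 0 * X^q` by
`form X * X^q`. -/
noncomputable def columnOps (X : Matrix (Fin (m + 1)) (Fin (n + 2)) R) (d : ℕ) :
    Matrix (MonIdx (n + 1) d ⊕ MonIdx n (d + 1)) (MonIdx (n + 1) d ⊕ MonIdx n (d + 1)) R :=
  Matrix.fromBlocks
    (Matrix.of fun p q => formCoeff X (mulVar 0 p) q) 0
    (Matrix.of fun p q => formCoeff X (extendVar p) q) 1

theorem det_columnOps (X : Matrix (Fin (m + 1)) (Fin (n + 2)) R) (d : ℕ) :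
    (columnOps X d).det = X 0 0 ^ Fintype.card (MonIdx (n + 1) d) := by
  rw [columnOps, Matrix.det_fromBlocks_zero₁₂, Matrix.det_one, mul_one,
    Matrix.det_of_isLowerTriangular]
  · simp only [Matrix.of_apply]
    rw [Finset.prod_congr rfl (g := fun _ => X 0 0), Finset.prod_const, Finset.card_univ]
    intro p _
    rw [formCoeff, Finset.sum_eq_single 0]
    · simp
    · intro j _ hj
      rw [if_neg, mul_zero]
      intro h
      have := congrArg (fun u => u.1 0) h
      simp [mulVar, Ne.symm hj] at this
    · simp
  · intro p q hpq
    have hlt : p < q := hpq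
    rw [Matrix.of_apply, formCoeff]
    refine Finset.sum_eq_zero fun j _ => ?_
    rw [if_neg, mul_zero]
    exact fun h => (le_of_mulVar_eq h).not_gt hlt

theorem veronese_mul_columnOps (e₁ : OmitIdx m (n + 1) ≃ MonIdx (n + 1) d)
    (e₂ : OmitIdx m n ≃ MonIdx n (d + 1)) (X : Matrix (Fin (m + 1)) (Fin (n + 2)) R) :
    (veronese (glue e₁ e₂) X).submatrix (monSum n d) (monSum n d) * columnOps X d =
      Matrix.fromBlocks
        (Matrix.of fun p q => maxMinor X (takeZero (e₁.symm p)) * veronese e₁ (tailRows X) p q)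
        (Matrix.of fun p q => nu (d + 1) (mu X (skipZero (e₁.symm p))) (extendVar q))
        0
        (Matrix.of fun p q => nu (d + 1) (mu X (takeZero (e₂.symm p))) (extendVar q)) := by
  have hcol : ∀ x q, columnOps X d x (Sum.inl q) = formCoeff X (monSum n d x) q := by
    rintro (x | x) q <;> rfl
  have hsum : ∀ (y : Fin (n + 2) → R) (q : MonIdx (n + 1) d),
      ∑ x, nu (d + 1) y (monSum n d x) * columnOps X d x (Sum.inl q) =
        form X y * nu d y q := by
    intro y q
    simp only [hcol]
    rw [Equiv.sum_comp (monSum n d) fun f => nu (d + 1) y f * formCoeff X f q,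
      sum_nu_mul_formCoeff]
  have hsum' : ∀ (y : Fin (n + 2) → R) (q : MonIdx n (d + 1)),
      ∑ x, nu (d + 1) y (monSum n d x) * columnOps X d x (Sum.inr q) =
        nu (d + 1) y (extendVar q) := by
    intro y q
    simp [Fintype.sum_sum_type, columnOps, Matrix.one_apply]
  ext p q
  rw [Matrix.mul_apply]
  simp only [Matrix.submatrix_apply, veronese, Matrix.of_apply]
  rcases q with q | q
  · rw [hsum]
    rcases p with p | p
    · rw [monSum_inl, glue_symm_inl, mu_skipZero, form_mu_tailRows]
      rfl
    · rw [monSum_inr, glue_symm_inr, form_mu_takeZero, zero_mul]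
      rfl
  · rw [hsum']
    rcases p with p | p
    · rw [monSum_inl, glue_symm_inl]
      rfl
    · rw [monSum_inr, glue_symm_inr]
      rfl

theorem det_veronese_glue {K : Type*} [Field K] (hm : m = n + (d + 1))
    (e₁ : OmitIdx m (n + 1) ≃ MonIdx (n + 1) d)
    (e₂ : OmitIdx m n ≃ MonIdx n (d + 1)) (X : Matrix (Fin (m + 1)) (Fin (n + 2)) K)
    (hX : X 0 0 ≠ 0)
    (h₁ : (veronese e₁ (tailRows X)).det = mu' (tailRows X) ^ (n + 1))
    (h₂ : (veronese e₂ (eliminate X)).det = mu' (eliminate X) ^ n) :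
    (veronese (glue e₁ e₂) X).det = mu' X ^ (n + 1) := by
  have c₁ : Fintype.card (MonIdx (n + 1) d) = m.choose (n + 1) := by
    rw [← Fintype.card_congr e₁]
    exact (Fintype.card_finset_len (α := Fin m) _).trans (by simp)
  have c₂ : Fintype.card (MonIdx n (d + 1)) = m.choose n := by
    rw [← Fintype.card_congr e₂]
    exact (Fintype.card_finset_len (α := Fin m) _).trans (by simp)
  have h := congrArg Matrix.det (veronese_mul_columnOps e₁ e₂ X)
  rw [Matrix.det_mul, Matrix.det_submatrix_equiv_self, det_columnOps,
    Matrix.det_fromBlocks_zero₂₁, Matrix.det_mul_column, h₁] at h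
  have hprod : ∏ s : OmitIdx m (n + 1), maxMinor X (takeZero s) =
      X 0 0 ^ m.choose (n + 1) * mu' (eliminate X) := by
    simp only [maxMinor_takeZero X hX, Finset.prod_mul_distrib, Finset.prod_const,
      Finset.card_univ, mu'_eq]
    rw [Fintype.card_congr e₁, c₁]
  have hD : Matrix.det (Matrix.of fun p q : MonIdx n (d + 1) =>
      nu (d + 1) (mu X (takeZero (e₂.symm p))) (extendVar q)) =
      (X 0 0 ^ (d + 1)) ^ m.choose n * mu' (eliminate X) ^ n := by
    rw [← h₂, ← c₂, ← Matrix.det_smul]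
    congr 1
    ext p q
    simp [nu_extendVar, mu_takeZero X hX, nu_smul, veronese]
  have hexp : m.choose (n + 1) * (n + 1) = (d + 1) * m.choose n := by
    rw [Nat.choose_succ_right_eq, hm, Nat.add_sub_cancel_left, mul_comm]
  rw [Equiv.prod_comp e₁.symm fun s => maxMinor X (takeZero s), hD, hprod, c₁] at h
  refine mul_right_cancel₀ (pow_ne_zero (m.choose (n + 1)) hX) ?_
  rw [h, mu'_succ, hprod, mul_pow, mul_pow, ← pow_mul, ← pow_mul, hexp]
  ring

end Step

/-! ### Reduction to the generic matrix, and the induction -/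

section Generic

variable {R S : Type*} [CommRing R] [CommRing S]

theorem mu_map (f : R →+* S) (X : Matrix (Fin m) (Fin (n + 1)) R) (s : OmitIdx m n)
    (j : Fin (n + 1)) : mu (X.map f) s j = f (mu X s j) := by
  simp only [mu, RingHom.map_det]
  rfl

theorem mu'_map (f : R →+* S) (X : Matrix (Fin m) (Fin (n + 1)) R) :
    mu' (X.map f) = f (mu' X) := by
  simp only [mu', map_prod, RingHom.map_det]
  rfl

theorem det_veronese_map (f : R →+* S) (e : OmitIdx m n ≃ MonIdx n d)
    (X : Matrix (Fin m) (Fin (n + 1)) R) :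
    (veronese e (X.map f)).det = f (veronese e X).det := by
  rw [RingHom.map_det]
  congr 1
  ext p q
  simp [veronese, nu, mu_map]

/-- The identity for the bijection `e` and the generic matrix, with independent variables as
entries. -/
def Generic (e : OmitIdx m n ≃ MonIdx n d) : Prop :=
  (veronese e (Matrix.mvPolynomialX (Fin m) (Fin (n + 1)) ℤ)).det =
    mu' (Matrix.mvPolynomialX (Fin m) (Fin (n + 1)) ℤ) ^ n

theorem Generic.specialize {e : OmitIdx m n ≃ MonIdx n d} (h : Generic e)
    (X : Matrix (Fin m) (Fin (n + 1)) R) : (veronese e X).det = mu' X ^ n := by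
  have hX : (Matrix.mvPolynomialX (Fin m) (Fin (n + 1)) ℤ).map
      (MvPolynomial.eval₂Hom (Int.castRingHom R) fun p => X p.1 p.2) = X :=
    Matrix.mvPolynomialX_map_eval₂ _ X
  rw [← hX, det_veronese_map, mu'_map, h, map_pow]

theorem Generic.glue (hm : m = n + (d + 1)) {e₁ : OmitIdx m (n + 1) ≃ MonIdx (n + 1) d}
    {e₂ : OmitIdx m n ≃ MonIdx n (d + 1)} (h₁ : Generic e₁) (h₂ : Generic e₂) :
    Generic (glue e₁ e₂) := by
  let A := MvPolynomial (Fin (m + 1) × Fin (n + 2)) ℤ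
  have hinj : Function.Injective (algebraMap A (FractionRing A)) :=
    IsFractionRing.injective A (FractionRing A)
  apply hinj
  rw [← det_veronese_map, map_pow, ← mu'_map]
  refine det_veronese_glue hm e₁ e₂ _ ?_ (h₁.specialize _) (h₂.specialize _)
  rw [Matrix.map_apply, Matrix.mvPolynomialX_apply]
  exact (map_ne_zero_iff _ hinj).2 (MvPolynomial.X_ne_zero _)

instance : Unique (MonIdx n 0) where
  default := ⟨0, by simp⟩
  uniq f := mon_ext fun i => Finset.sum_eq_zero_iff.1 f.2 i (Finset.mem_univ i)

instance : Unique (MonIdx 0 d) where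
  default := ⟨fun _ => d, by simp⟩
  uniq f := mon_ext fun i => by
    have h : ∑ i, f.1 i = d := f.2
    rw [Fin.sum_univ_one] at h
    rw [Fin.fin_one_eq_zero i, h]

instance : Unique (OmitIdx m 0) where
  default := ⟨∅, rfl⟩
  uniq s := Subtype.ext (Finset.card_eq_zero.1 s.2)

instance : Unique (OmitIdx m m) where
  default := ⟨Finset.univ, by simp⟩
  uniq s := Subtype.ext ((Finset.card_eq_iff_eq_univ s.1).1 (by simpa using s.2))

instance : IsEmpty {t : Finset (Fin m) // t.card = m + 1} :=
  ⟨fun t => by simpa [t.2] using Finset.card_le_univ t.1⟩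

theorem exists_generic (m n d : ℕ) (hm : m = n + d) :
    ∃ e : OmitIdx m n ≃ MonIdx n d, StrictMono e ∧ Generic e := by
  induction m generalizing n d with
  | zero =>
    obtain ⟨rfl, rfl⟩ : n = 0 ∧ d = 0 := by omega
    refine ⟨Equiv.ofUnique _ _, Subsingleton.strictMono _, ?_⟩
    rw [Generic, Matrix.det_unique, pow_zero]
    simp [veronese, nu, mu]
  | succ m ih =>
    rcases n with _ | n
    · refine ⟨Equiv.ofUnique _ _, Subsingleton.strictMono _, ?_⟩
      rw [Generic, Matrix.det_unique, pow_zero]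
      simp [veronese, nu, mu]
    rcases d with _ | d
    · obtain rfl : m = n := by omega
      refine ⟨Equiv.ofUnique _ _, Subsingleton.strictMono _, ?_⟩
      rw [Generic, Matrix.det_unique, mu', Fintype.prod_empty, one_pow]
      rw [veronese, Matrix.of_apply, nu]
      refine Finset.prod_eq_one fun i _ => ?_
      rw [show (default : MonIdx (m + 1) 0).1 i = 0 from rfl, pow_zero]
    obtain ⟨e₁, he₁, h₁⟩ := ih (n + 1) d (by omega)
    obtain ⟨e₂, he₂, h₂⟩ := ih n (d + 1) (by omega)
    exact ⟨glue e₁ e₂, glue_strictMono he₁ he₂, h₁.glue (by omega) h₂⟩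

end Generic

end MultivariateVandermonde

/-- **The multivariate Vandermonde identity** (Theorem 1 of the paper).
For a commutative ring `R`, `n, d ≥ 1` and an `(n+d) × (n+1)` matrix `X` over `R`,
the matrix `ν^d (μ X)` — whose rows are indexed by the `n`-element subsets of rows of `X`
(ordered lexicographically by the omitted rows) and whose columns are indexed by the
monomials of total degree `d` in `n + 1` variables (in inverse lexicographic order) —
is a square matrix of order `C(n+d, n)`, and its determinant (computed via the unique
order isomorphism `e` matching the two index orders) equals `(μ' X) ^ n`. -/
theorem multivariate_vandermonde {R : Type*} [CommRing R] (n d : ℕ) (hn : 1 ≤ n) (hd : 1 ≤ d)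
    (X : Matrix (Fin (n + d)) (Fin (n + 1)) R) :
    Fintype.card (OmitIdx (n + d) n) = (n + d).choose n ∧
    Fintype.card (MonIdx n d) = (n + d).choose n ∧
    ∀ e : OmitIdx (n + d) n ≃o MonIdx n d,
      Matrix.det (Matrix.of fun p q : MonIdx n d => nu d (mu X (e.symm p)) q) =
        mu' X ^ n := by
  obtain ⟨e₀, he₀, h₀⟩ := MultivariateVandermonde.exists_generic (n + d) n d rfl
  have hcard : Fintype.card (OmitIdx (n + d) n) = (n + d).choose n :=
    (Fintype.card_finset_len (α := Fin (n + d)) n).trans (by simp)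
  refine ⟨hcard, (Fintype.card_congr e₀).symm.trans hcard, fun e => ?_⟩
  -- Two order isomorphisms between finite linear orders coincide.
  have he : e = he₀.orderIsoOfSurjective e₀ e₀.surjective :=
    OrderIso.subsingleton_of_wellFoundedLT.elim _ _
  have he' : e.toEquiv = e₀ := by
    rw [he]
    ext s
    rfl
  have h := h₀.specialize X
  rw [← he'] at h
  exact h
end

section
/- Let n, d ∈ ℕ with n, d ≥ 1. There exists a sign ε ∈ {1, −1}, depending only on n and d, such that for every commutative ring R and every (n+d)×(n+1) matrix X over R, the matrix η^d(X) is a square matrix of order C(n+d, n) and det(η^d(X)) = ε · μ'(X). -/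
/-- The index type for the rows of `η^d X`: subsets of `Fin m` of cardinality `k`,
ordered lexicographically by the increasing sequences of rows *taken* (equivalently, by
the dual of the lexicographic order on indicator functions). -/
def TakeIdx (m k : ℕ) : Type := {s : Finset (Fin m) // s.card = k}

instance (m k : ℕ) : DecidableEq (TakeIdx m k) :=
  inferInstanceAs (DecidableEq {s : Finset (Fin m) // s.card = k})

instance (m k : ℕ) : Fintype (TakeIdx m k) :=
  inferInstanceAs (Fintype {s : Finset (Fin m) // s.card = k})

noncomputable instance (m k : ℕ) : LinearOrder (TakeIdx m k) :=
  LinearOrder.lift'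
    (fun s : {s : Finset (Fin m) // s.card = k} =>
      OrderDual.toDual (toLex fun i : Fin m => decide (i ∈ s.1)))
    (fun s t h => Subtype.ext (Finset.ext fun i => by
      have h' := congrFun ((toLex (α := Fin m → Bool)).injective
        (OrderDual.toDual.injective h)) i
      simpa [decide_eq_decide] using h'))

/-- `η^d X` : each row `x` of `X` is identified with the linear polynomial
`x 0 • Y 0 + … + x n • Y n`; for a `d`-element set `s` of rows of `X`, the row of `η^d X`
indexed by `s` consists of the coefficients of the product of the corresponding linear
polynomials, a homogeneous polynomial of degree `d` in the `n + 1` variables `Y j`. -/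
noncomputable def eta {R : Type*} [CommRing R] {m n d : ℕ}
    (X : Matrix (Fin m) (Fin (n + 1)) R) (s : TakeIdx m d) (f : MonIdx n d) : R :=
  MvPolynomial.coeff (Finsupp.equivFunOnFinite.symm f.1)
    (∏ i ∈ s.1, ∑ j, MvPolynomial.C (X i j) * MvPolynomial.X j)

namespace EtaDet

/-- Exponent vectors of the monomials of degree `d` in `k` variables. In contrast to `MonIdx`,
zero variables are allowed, which makes the base case of the induction trivial. -/
abbrev Mon (k d : ℕ) : Type := {f : Fin k → ℕ // ∑ i, f i = d}

instance (k d : ℕ) : Fintype (Mon k d) :=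
  Fintype.subtype (Finset.Nat.antidiagonalTuple k d) fun _ => Finset.Nat.mem_antidiagonalTuple

section

variable {R : Type*} [CommRing R] {m k d : ℕ}

/-- The linear form attached to the row `i` of `X`. -/
noncomputable def lin (X : Matrix (Fin m) (Fin k) R) (i : Fin m) : MvPolynomial (Fin k) R :=
  ∑ j, MvPolynomial.C (X i j) * MvPolynomial.X j

/-- The entries of `η^d X`, for row sets of any size and any number of variables. -/
noncomputable def entry (X : Matrix (Fin m) (Fin k) R) (s : Finset (Fin m)) (f : Fin k → ℕ) : R :=
  MvPolynomial.coeff (Finsupp.equivFunOnFinite.symm f) (∏ i ∈ s, lin X i)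

/-- The maximal minor of `X` on the rows in `t`. -/
def minor (X : Matrix (Fin m) (Fin k) R) (t : TakeIdx m k) : R :=
  (X.submatrix (t.1.orderEmbOfFin t.2) id).det

lemma minor_eq (X : Matrix (Fin m) (Fin k) R) (t : TakeIdx m k) {r : Fin k → Fin m}
    (hr : ∀ a, r a ∈ t.1) (hmono : StrictMono r) : minor X t = (X.submatrix r id).det := by
  rw [minor, ← Finset.orderEmbOfFin_unique t.2 hr hmono]

/-! ### Splitting off the first row and the first variable -/

/-- Adjoins row `0` to a set of later rows. -/
def consTake (s : TakeIdx m d) : TakeIdx (m + 1) (d + 1) :=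
  ⟨Finset.cons 0 (s.1.map (Fin.succEmb m)) (by simp [Fin.succ_ne_zero]), by simp [s.2]⟩

/-- Shifts a set of rows so that it avoids row `0`. -/
def succTake (s : TakeIdx m d) : TakeIdx (m + 1) d :=
  ⟨s.1.map (Fin.succEmb m), by simp [s.2]⟩

lemma zero_mem_consTake (s : TakeIdx m d) : (0 : Fin (m + 1)) ∈ (consTake s).1 := by
  simp [consTake]

lemma zero_notMem_succTake (s : TakeIdx m d) : (0 : Fin (m + 1)) ∉ (succTake s).1 := by
  simp [succTake, Fin.succ_ne_zero]

lemma card_take (m d : ℕ) : Fintype.card (TakeIdx m d) = m.choose d :=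
  (Fintype.card_finset_len (α := Fin m) d).trans (by simp)

/-- Pascal's rule for row sets: each one contains row `0` or avoids it. -/
noncomputable def takeEquiv (m d : ℕ) : TakeIdx m d ⊕ TakeIdx m (d + 1) ≃ TakeIdx (m + 1) (d + 1) :=
  Equiv.ofBijective (Sum.elim consTake succTake) <| by
    rw [Fintype.bijective_iff_injective_and_card]
    constructor
    · rintro (s | s) (t | t) h
      · have h' := congrArg Subtype.val h
        simp only [Sum.elim_inl, consTake] at h'
        rw [Finset.cons_eq_insert, Finset.cons_eq_insert] at h'
        have h2 := congrArg (fun u => Finset.erase u 0) h'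
        rw [Finset.erase_insert (by simp [Fin.succ_ne_zero]),
          Finset.erase_insert (by simp [Fin.succ_ne_zero])] at h2
        exact congrArg Sum.inl (Subtype.ext (Finset.map_injective _ h2))
      · have h0 := zero_mem_consTake s
        simp only [Sum.elim_inl, Sum.elim_inr] at h
        exact (zero_notMem_succTake t (h ▸ h0)).elim
      · have h0 := zero_mem_consTake t
        simp only [Sum.elim_inl, Sum.elim_inr] at h
        exact (zero_notMem_succTake s (h.symm ▸ h0)).elim
      · have h' := congrArg Subtype.val h
        simp only [Sum.elim_inr, succTake] at h'
        exact congrArg Sum.inr (Subtype.ext (Finset.map_injective _ h'))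
    · rw [Fintype.card_sum, card_take, card_take, card_take, Nat.choose_succ_succ]

/-- Multiplication of a monomial by the first variable. -/
def bumpMon (f : Mon (k + 1) d) : Mon (k + 1) (d + 1) :=
  ⟨Fin.cons (f.1 0 + 1) (Fin.tail f.1), by
    have := f.2
    rw [Fin.sum_univ_succ] at this ⊢
    simp only [Fin.cons_zero, Fin.cons_succ, Fin.tail]
    omega⟩

/-- A monomial in the later variables, seen as a monomial free of the first variable. -/
def zeroMon (f : Mon k d) : Mon (k + 1) d :=
  ⟨Fin.cons 0 f.1, by rw [Fin.sum_univ_succ]; simpa using f.2⟩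

/-- Pascal's rule for monomials: each one is divisible by the first variable or free of it. -/
noncomputable def monEquiv (k d : ℕ) : Mon (k + 1) d ⊕ Mon k (d + 1) ≃ Mon (k + 1) (d + 1) :=
  Equiv.ofBijective (Sum.elim bumpMon zeroMon) <| by
    constructor
    · rintro (f | f) (g | g) h
      · have h' := congrArg Subtype.val h
        simp only [Sum.elim_inl, bumpMon] at h'
        obtain ⟨h0, h1⟩ := Fin.cons_inj.1 h'
        refine congrArg Sum.inl (Subtype.ext ?_)
        rw [← Fin.cons_self_tail f.1, ← Fin.cons_self_tail g.1, h1, Nat.succ_injective h0]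
      · have h' := congrFun (congrArg Subtype.val h) 0
        simp [bumpMon, zeroMon] at h'
      · have h' := congrFun (congrArg Subtype.val h) 0
        simp [bumpMon, zeroMon] at h'
      · have h' := congrArg Subtype.val h
        simp only [Sum.elim_inr, zeroMon] at h'
        exact congrArg Sum.inr (Subtype.ext (Fin.cons_inj.1 h').2)
    · rintro ⟨f, hf⟩
      rw [Fin.sum_univ_succ] at hf
      rcases h0 : f 0 with _ | a
      · refine ⟨Sum.inr ⟨Fin.tail f, by simp only [Fin.tail]; omega⟩, Subtype.ext ?_⟩
        simp only [Sum.elim_inr, zeroMon]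
        rw [← h0, Fin.cons_self_tail]
      · refine ⟨Sum.inl ⟨Fin.cons a (Fin.tail f), ?_⟩, Subtype.ext ?_⟩
        · rw [Fin.sum_univ_succ]
          simp only [Fin.cons_zero, Fin.cons_succ, Fin.tail]
          omega
        · simp only [Sum.elim_inl, bumpMon, Fin.cons_zero, Fin.tail_cons]
          rw [← h0, Fin.cons_self_tail]

lemma minor_succTake (X : Matrix (Fin (m + 1)) (Fin k) R) (t : TakeIdx m k) :
    minor X (succTake t) = minor (X.submatrix Fin.succ id) t := by
  rw [minor_eq X (succTake t) (r := Fin.succ ∘ t.1.orderEmbOfFin t.2)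
    (fun a => by simp [succTake]) (fun a b h => by simpa using h)]
  rfl

lemma minor_consTake (X : Matrix (Fin (m + 1)) (Fin (k + 1)) R) (t : TakeIdx m k) :
    minor X (consTake t) =
      (X.submatrix (Fin.cons 0 (Fin.succ ∘ t.1.orderEmbOfFin t.2)) id).det := by
  refine minor_eq X _ (fun a => ?_) (fun a b h => ?_)
  · refine Fin.cases ?_ (fun a => ?_) a <;> simp [consTake]
  · revert h
    refine Fin.cases ?_ (fun b => ?_) b <;> refine Fin.cases ?_ (fun a => ?_) a <;> simp

/-! ### The case where the first linear form is the first variable -/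

lemma symm_cons (a : ℕ) (f : Fin k → ℕ) :
    (Finsupp.equivFunOnFinite.symm (Fin.cons a f : Fin (k + 1) → ℕ)) =
      (Finsupp.equivFunOnFinite.symm f).cons a := by
  ext i
  refine Fin.cases ?_ (fun i => ?_) i <;> simp

lemma entry_succTake (X : Matrix (Fin (m + 1)) (Fin (k + 1)) R) (s : TakeIdx m (d + 1))
    (f : Mon k (d + 1)) :
    entry X (succTake s).1 (zeroMon f).1 = entry (X.submatrix Fin.succ Fin.succ) s.1 f.1 := by
  simp only [entry, succTake, zeroMon]
  rw [symm_cons, ← MvPolynomial.finSuccEquiv_coeff_coeff, Finset.prod_map,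
    ← Polynomial.constantCoeff_apply, map_prod, map_prod]
  congr 1
  refine Finset.prod_congr rfl fun i _ => ?_
  simp [lin, Fin.sum_univ_succ, MvPolynomial.finSuccEquiv_apply]

lemma lin_of_row_eq (X : Matrix (Fin m) (Fin (k + 1)) R) {i : Fin m} (h : X i = Pi.single 0 1) :
    lin X i = MvPolynomial.X 0 := by
  simp [lin, h, Fin.sum_univ_succ]

lemma entry_consTake_bump (X : Matrix (Fin (m + 1)) (Fin (k + 1)) R) (h : X 0 = Pi.single 0 1)
    (s : TakeIdx m d) (f : Mon (k + 1) d) :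
    entry X (consTake s).1 (bumpMon f).1 = entry (X.submatrix Fin.succ id) s.1 f.1 := by
  simp only [entry, consTake, bumpMon]
  rw [Finset.prod_cons, lin_of_row_eq X h, Finset.prod_map]
  have : Finsupp.equivFunOnFinite.symm (Fin.cons (f.1 0 + 1) (Fin.tail f.1) : Fin (k + 1) → ℕ) =
      Finsupp.single 0 1 + Finsupp.equivFunOnFinite.symm f.1 := by
    ext i
    refine Fin.cases ?_ (fun i => ?_) i
    · simp [add_comm]
    · simp [Fin.tail]
  rw [this, MvPolynomial.coeff_X_mul]
  rfl

lemma entry_consTake_zero (X : Matrix (Fin (m + 1)) (Fin (k + 1)) R) (h : X 0 = Pi.single 0 1)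
    (s : TakeIdx m d) (f : Mon k (d + 1)) :
    entry X (consTake s).1 (zeroMon f).1 = 0 := by
  simp only [entry, consTake, zeroMon]
  rw [Finset.prod_cons, lin_of_row_eq X h, MvPolynomial.coeff_X_mul']
  simp

/-- The identity `det η^d X = μ' X`, for a given matching of row sets with monomials. -/
def Holds (e : TakeIdx m d ≃ Mon k d) (X : Matrix (Fin m) (Fin k) R) : Prop :=
  (Matrix.of fun s s' : TakeIdx m d => entry X s.1 (e s').1).det = ∏ t, minor X t

/-- The matching of `d + 1`-subsets with monomials of degree `d + 1` obtained from two smaller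
matchings by Pascal's rule. -/
noncomputable def stepEquiv (e₁ : TakeIdx m d ≃ Mon (k + 1) d)
    (e₂ : TakeIdx m (d + 1) ≃ Mon k (d + 1)) : TakeIdx (m + 1) (d + 1) ≃ Mon (k + 1) (d + 1) :=
  (takeEquiv m d).symm.trans ((Equiv.sumCongr e₁ e₂).trans (monEquiv k d))

lemma stepEquiv_inl (e₁ : TakeIdx m d ≃ Mon (k + 1) d) (e₂ : TakeIdx m (d + 1) ≃ Mon k (d + 1))
    (s : TakeIdx m d) : stepEquiv e₁ e₂ (takeEquiv m d (Sum.inl s)) = bumpMon (e₁ s) := by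
  simp only [stepEquiv, Equiv.trans_apply, Equiv.symm_apply_apply]
  rfl

lemma stepEquiv_inr (e₁ : TakeIdx m d ≃ Mon (k + 1) d) (e₂ : TakeIdx m (d + 1) ≃ Mon k (d + 1))
    (s : TakeIdx m (d + 1)) :
    stepEquiv e₁ e₂ (takeEquiv m d (Sum.inr s)) = zeroMon (e₂ s) := by
  simp only [stepEquiv, Equiv.trans_apply, Equiv.symm_apply_apply]
  rfl

lemma holds_of_row_eq (e₁ : TakeIdx m d ≃ Mon (k + 1) d) (e₂ : TakeIdx m (d + 1) ≃ Mon k (d + 1))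
    (X : Matrix (Fin (m + 1)) (Fin (k + 1)) R) (h : X 0 = Pi.single 0 1)
    (h₁ : Holds e₁ (X.submatrix Fin.succ id)) (h₂ : Holds e₂ (X.submatrix Fin.succ Fin.succ)) :
    Holds (stepEquiv e₁ e₂) X := by
  unfold Holds at *
  rw [← Matrix.det_submatrix_equiv_self (takeEquiv m d)]
  -- rows: sets containing row `0`, sets avoiding it; columns: multiples of the first variable,
  -- monomials free of it
  have hblock : (Matrix.of fun s s' : TakeIdx (m + 1) (d + 1) =>
        entry X s.1 (stepEquiv e₁ e₂ s').1).submatrix (takeEquiv m d) (takeEquiv m d) =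
      Matrix.fromBlocks
        (Matrix.of fun s s' : TakeIdx m d => entry (X.submatrix Fin.succ id) s.1 (e₁ s').1) 0
        (Matrix.of fun (s : TakeIdx m (d + 1)) (s' : TakeIdx m d) =>
          entry X (succTake s).1 (bumpMon (e₁ s')).1)
        (Matrix.of fun s s' : TakeIdx m (d + 1) =>
          entry (X.submatrix Fin.succ Fin.succ) s.1 (e₂ s').1) := by
    ext (s | s) (s' | s') <;>
      simp only [Matrix.submatrix_apply, Matrix.of_apply, stepEquiv_inl, stepEquiv_inr]
    · exact entry_consTake_bump X h s (e₁ s')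
    · exact entry_consTake_zero X h s (e₂ s')
    · rfl
    · exact entry_succTake X s (e₂ s')
  rw [hblock, Matrix.det_fromBlocks_zero₁₂, h₁, h₂, ← (takeEquiv m k).prod_comp,
    Fintype.prod_sum_type, mul_comm]
  congr 1
  · refine Finset.prod_congr rfl fun t _ => ?_
    change _ = minor X (consTake t)
    rw [minor_consTake, Matrix.det_succ_row_zero, Fin.sum_univ_succ]
    simp [h, minor, Matrix.submatrix_submatrix]
  · refine Finset.prod_congr rfl fun t _ => ?_
    exact (minor_succTake X t).symm

/-! ### Unipotent change of variables -/

lemma isHomogeneous_prod_lin (X : Matrix (Fin m) (Fin k) R) (s : TakeIdx m d) :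
    (∏ i ∈ s.1, lin X i).IsHomogeneous d := by
  have h : ∀ i ∈ s.1, (lin X i).IsHomogeneous 1 := fun i _ =>
    MvPolynomial.IsHomogeneous.sum _ _ _ fun j _ => by
      simpa using (MvPolynomial.isHomogeneous_C _ (X i j)).mul (MvPolynomial.isHomogeneous_X R j)
  simpa [s.2] using MvPolynomial.IsHomogeneous.prod s.1 (lin X) (fun _ => 1) h

lemma eq_sum_monomial {p : MvPolynomial (Fin k) R} (hp : p.IsHomogeneous d) :
    p = ∑ b : Mon k d, MvPolynomial.monomial (Finsupp.equivFunOnFinite.symm b.1)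
      (p.coeff (Finsupp.equivFunOnFinite.symm b.1)) := by
  classical
  ext v
  rw [MvPolynomial.coeff_sum]
  simp only [MvPolynomial.coeff_monomial]
  by_cases hv : ∑ i, v i = d
  · rw [Finset.sum_eq_single (⟨v, hv⟩ : Mon k d)]
    · simp
    · rintro ⟨b, hb⟩ _ hne
      rw [if_neg]
      rintro rfl
      exact hne (Subtype.ext (by simp))
    · simp
  · rw [Finset.sum_eq_zero, hp.coeff_eq_zero]
    · rwa [Finsupp.degree_eq_sum]
    · rintro ⟨b, hb⟩ _
      rw [if_neg]
      rintro rfl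
      exact hv (by simpa using hb)

/-- Matrix of the substitution of variables given by `g`, on the monomials of degree `d`. -/
noncomputable def subst (d : ℕ) (g : Matrix (Fin k) (Fin k) R) : Matrix (Mon k d) (Mon k d) R :=
  Matrix.of fun b f => MvPolynomial.coeff (Finsupp.equivFunOnFinite.symm f.1)
    (MvPolynomial.aeval (lin g) (MvPolynomial.monomial (Finsupp.equivFunOnFinite.symm b.1) (1 : R)))

lemma aeval_lin (Z : Matrix (Fin m) (Fin k) R) (g : Matrix (Fin k) (Fin k) R) (i : Fin m) :
    MvPolynomial.aeval (lin g) (lin Z i) = lin (Z * g) i := by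
  simp only [lin, map_sum, map_mul, MvPolynomial.aeval_X, MvPolynomial.algHom_C, Matrix.mul_apply,
    Finset.mul_sum, Finset.sum_mul, MvPolynomial.algebraMap_eq]
  rw [Finset.sum_comm]
  simp only [mul_assoc]

lemma entry_mul (Z : Matrix (Fin m) (Fin k) R) (g : Matrix (Fin k) (Fin k) R) (s : TakeIdx m d)
    (f : Mon k d) : entry (Z * g) s.1 f.1 = ∑ b : Mon k d, entry Z s.1 b.1 * subst d g b f := by
  have h := congrArg (MvPolynomial.aeval (lin g)) (eq_sum_monomial (isHomogeneous_prod_lin Z s))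
  rw [map_prod] at h
  simp only [aeval_lin] at h
  rw [entry, h, map_sum, MvPolynomial.coeff_sum]
  refine Finset.sum_congr rfl fun b _ => ?_
  rw [subst, Matrix.of_apply, entry, ← MvPolynomial.coeff_C_mul,
    ← MvPolynomial.algebraMap_eq, ← Algebra.smul_def, ← map_smul, MvPolynomial.smul_monomial]
  simp

/-- The substitution `Y₀ ↦ Y₀ + ∑ j ≥ 1, x j * Y j`, fixing the other variables. -/
def shear (x : Fin (k + 1) → R) : Matrix (Fin (k + 1)) (Fin (k + 1)) R :=
  (1 : Matrix (Fin (k + 1)) (Fin (k + 1)) R).updateRow 0 x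

lemma det_shear (x : Fin (k + 1) → R) (hx : x 0 = 1) : (shear x).det = 1 := by
  rw [Matrix.det_of_isUpperTriangular]
  · refine Finset.prod_eq_one fun i _ => ?_
    refine Fin.cases ?_ (fun i => ?_) i
    · simp [shear, hx]
    · simp [shear]
  · intro i j hij
    have hi : i ≠ 0 := by rintro rfl; exact absurd hij (by simp)
    simp only [id] at hij
    simp [shear, Matrix.updateRow_ne hi, Matrix.one_apply_ne (Ne.symm hij.ne)]

/-- The coefficients of `(Y₀ + l)^a * Y'^b'` in degree at least `a` in `Y₀` come from the
leading term `Y₀^a * Y'^b'` alone. -/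
lemma subst_shear_apply (x : Fin (k + 1) → R) (hx : x 0 = 1) (b f : Mon (k + 1) d)
    (h : b.1 0 ≤ f.1 0) : subst d (shear x) b f = if b = f then 1 else 0 := by
  have hmon : MvPolynomial.finSuccEquiv R k (MvPolynomial.aeval (lin (shear x))
        (MvPolynomial.monomial (Finsupp.equivFunOnFinite.symm b.1) (1 : R))) =
      (Polynomial.X + Polynomial.C (∑ j : Fin k, MvPolynomial.C (x j.succ) * MvPolynomial.X j)) ^
        b.1 0 * Polynomial.C (MvPolynomial.monomial (Finsupp.equivFunOnFinite.symm
          (Fin.tail b.1)) (1 : R)) := by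
    have h0 : lin (shear x) 0 = MvPolynomial.X 0 +
        ∑ j : Fin k, MvPolynomial.C (x j.succ) * MvPolynomial.X j.succ := by
      simp [lin, shear, Fin.sum_univ_succ, hx]
    have hs : ∀ j : Fin k, lin (shear x) j.succ = MvPolynomial.X j.succ := by
      intro j
      simp [lin, shear, Matrix.one_apply]
    rw [MvPolynomial.aeval_monomial, Finsupp.prod_fintype _ _ (by simp), Fin.prod_univ_succ, h0]
    simp only [hs]
    rw [MvPolynomial.monomial_eq, Finsupp.prod_fintype _ _ (by simp)]
    simp [Fin.tail, MvPolynomial.finSuccEquiv_apply]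
  have hf : Finsupp.equivFunOnFinite.symm f.1 =
      (Finsupp.equivFunOnFinite.symm (Fin.tail f.1)).cons (f.1 0) := by
    rw [← symm_cons, Fin.cons_self_tail]
  set l : MvPolynomial (Fin k) R := ∑ j : Fin k, MvPolynomial.C (x j.succ) * MvPolynomial.X j
  rw [subst, Matrix.of_apply, hf, ← MvPolynomial.finSuccEquiv_coeff_coeff, hmon,
    Polynomial.coeff_mul_C, Polynomial.coeff_X_add_C_pow]
  rcases h.lt_or_eq with h | h
  · rw [Nat.choose_eq_zero_of_lt h, if_neg (by rintro rfl; exact h.false)]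
    simp
  · rw [← h]
    have hiff : Fin.tail b.1 = Fin.tail f.1 ↔ b = f := by
      refine ⟨fun h' => Subtype.ext ?_, fun h' => by rw [h']⟩
      rw [← Fin.cons_self_tail b.1, ← Fin.cons_self_tail f.1, h, h']
    simp [MvPolynomial.coeff_monomial, hiff]

lemma det_subst_shear (d : ℕ) (x : Fin (k + 1) → R) (hx : x 0 = 1) :
    (subst d (shear x)).det = 1 := by
  have hb : (subst d (shear x)).BlockTriangular
      (fun f : Mon (k + 1) d => OrderDual.toDual (f.1 0)) := by
    intro b f h
    have h : b.1 0 < f.1 0 := h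
    rw [subst_shear_apply x hx b f h.le, if_neg (by rintro rfl; exact h.false)]
  rw [hb.det]
  refine Finset.prod_eq_one fun a _ => ?_
  rw [show (subst d (shear x)).toSquareBlock _ a = 1 from ?_, Matrix.det_one]
  ext ⟨b, hb⟩ ⟨f, hf⟩
  rw [Matrix.toSquareBlock_def, Matrix.of_apply,
    subst_shear_apply x hx b f (OrderDual.toDual.injective (hb.trans hf.symm)).le]
  simp [Matrix.one_apply]

lemma minor_mul (Z : Matrix (Fin m) (Fin k) R) (g : Matrix (Fin k) (Fin k) R) (t : TakeIdx m k) :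
    minor (Z * g) t = minor Z t * g.det := by
  rw [minor, minor, ← Matrix.det_mul]
  rfl

lemma holds_mul_shear (e : TakeIdx m d ≃ Mon (k + 1) d) (Z : Matrix (Fin m) (Fin (k + 1)) R)
    (x : Fin (k + 1) → R) (hx : x 0 = 1) (h : Holds e Z) : Holds e (Z * shear x) := by
  unfold Holds at *
  have hmul : (Matrix.of fun s s' : TakeIdx m d => entry (Z * shear x) s.1 (e s').1) =
      (Matrix.of fun s s' : TakeIdx m d => entry Z s.1 (e s').1) *
        (subst d (shear x)).submatrix e e := by
    ext s s'
    rw [Matrix.of_apply, entry_mul, ← e.sum_comp]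
    rfl
  rw [hmul, Matrix.det_mul, Matrix.det_submatrix_equiv_self, det_subst_shear d x hx, h]
  simp [minor_mul, det_shear x hx]

/-! ### Scaling the first row -/

lemma prod_take_ite (u : R) (m d : ℕ) :
    ∏ s : TakeIdx (m + 1) (d + 1), (if (0 : Fin (m + 1)) ∈ s.1 then u else 1) =
      u ^ m.choose d := by
  rw [← (takeEquiv m d).prod_comp, Fintype.prod_sum_type]
  have h₁ : ∀ s : TakeIdx m d, (0 : Fin (m + 1)) ∈ (takeEquiv m d (Sum.inl s)).1 :=
    zero_mem_consTake
  have h₂ : ∀ s : TakeIdx m (d + 1), (0 : Fin (m + 1)) ∉ (takeEquiv m d (Sum.inr s)).1 :=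
    zero_notMem_succTake
  simp [h₁, h₂, card_take]

lemma entry_scale (u : R) (X : Matrix (Fin (m + 1)) (Fin k) R) (s : Finset (Fin (m + 1)))
    (f : Fin k → ℕ) :
    entry (X.updateRow 0 (u • X 0)) s f = (if 0 ∈ s then u else 1) * entry X s f := by
  have hlin : ∀ i, lin (X.updateRow 0 (u • X 0)) i =
      MvPolynomial.C (if i = 0 then u else 1) * lin X i := by
    intro i
    by_cases hi : i = 0
    · subst hi
      simp [lin, Finset.mul_sum, mul_assoc]
    · simp [lin, hi]
  simp only [entry, hlin]
  rw [Finset.prod_mul_distrib, ← map_prod, MvPolynomial.coeff_C_mul, Finset.prod_ite_eq']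

lemma minor_scale (u : R) (X : Matrix (Fin (m + 1)) (Fin k) R) (t : TakeIdx (m + 1) k) :
    minor (X.updateRow 0 (u • X 0)) t = (if 0 ∈ t.1 then u else 1) * minor X t := by
  rw [minor, minor]
  have hrow : (X.updateRow 0 (u • X 0)).submatrix (t.1.orderEmbOfFin t.2) id =
      Matrix.of fun a b => (if t.1.orderEmbOfFin t.2 a = 0 then u else 1) *
        X.submatrix (t.1.orderEmbOfFin t.2) id a b := by
    ext a b
    by_cases ha : t.1.orderEmbOfFin t.2 a = 0
    · simp [ha]
    · simp [ha]
  rw [hrow, Matrix.det_mul_column]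
  congr 1
  rw [← Finset.prod_ite_eq' t.1 (0 : Fin (m + 1)) (fun _ => u)]
  conv_rhs => rw [← Finset.image_orderEmbOfFin_univ t.1 t.2]
  rw [Finset.prod_image (fun _ _ _ _ h => (t.1.orderEmbOfFin t.2).injective h)]

/-- Both sides of the identity scale by the same power, since `d` out of `k + d` elements can
be chosen in as many ways as `k`. -/
lemma holds_scale (hm : m = k + d) (e : TakeIdx (m + 1) (d + 1) ≃ Mon (k + 1) (d + 1)) (u : R)
    (X : Matrix (Fin (m + 1)) (Fin (k + 1)) R) (h : Holds e X) :
    Holds e (X.updateRow 0 (u • X 0)) := by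
  have hchoose : m.choose d = m.choose k := by rw [hm, Nat.choose_symm_add]
  unfold Holds at *
  simp only [entry_scale, minor_scale]
  have := Matrix.det_mul_column
    (fun s : TakeIdx (m + 1) (d + 1) => if (0 : Fin (m + 1)) ∈ s.1 then u else 1)
    (Matrix.of fun s s' : TakeIdx (m + 1) (d + 1) => entry X s.1 (e s').1)
  simp only [Matrix.of_apply] at this
  rw [this, h, Finset.prod_mul_distrib, prod_take_ite, prod_take_ite, hchoose]

/-! ### Change of rings -/

variable {S : Type*} [CommRing S]

lemma entry_map (φ : R →+* S) (X : Matrix (Fin m) (Fin k) R) (s : Finset (Fin m))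
    (f : Fin k → ℕ) : entry (X.map φ) s f = φ (entry X s f) := by
  rw [entry, entry, ← MvPolynomial.coeff_map, map_prod]
  simp [lin]

lemma minor_map (φ : R →+* S) (X : Matrix (Fin m) (Fin k) R) (t : TakeIdx m k) :
    minor (X.map φ) t = φ (minor X t) := by
  rw [minor, minor, RingHom.map_det]
  rfl

lemma holds_map_iff (φ : R →+* S) (e : TakeIdx m d ≃ Mon k d) (X : Matrix (Fin m) (Fin k) R) :
    Holds e (X.map φ) ↔
      φ (Matrix.of fun s s' : TakeIdx m d => entry X s.1 (e s').1).det = φ (∏ t, minor X t) := by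
  rw [Holds, RingHom.map_det, map_prod]
  simp only [minor_map, entry_map]
  rfl

end

/-! ### The induction -/

universe u

/-- The inductive step when the leading coefficient of the first linear form is invertible. -/
lemma holds_step_unit {m k d : ℕ} (hm : m = k + d) (e₁ : TakeIdx m d ≃ Mon (k + 1) d)
    (e₂ : TakeIdx m (d + 1) ≃ Mon k (d + 1)) {R : Type u} [CommRing R]
    (h₁ : ∀ X : Matrix (Fin m) (Fin (k + 1)) R, Holds e₁ X)
    (h₂ : ∀ X : Matrix (Fin m) (Fin k) R, Holds e₂ X)
    (X : Matrix (Fin (m + 1)) (Fin (k + 1)) R) (hX : IsUnit (X 0 0)) :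
    Holds (stepEquiv e₁ e₂) X := by
  obtain ⟨u, hu⟩ := hX
  set x : Fin (k + 1) → R := (↑u⁻¹ : R) • X 0 with hx
  have hx0 : x 0 = 1 := by simp [hx, ← hu]
  -- `Z` is the matrix with normalized first row, in coordinates where its first form is the first
  -- variable; the shear by `2 • e₀ - x` is inverse to the shear by `x`
  set Z : Matrix (Fin (m + 1)) (Fin (k + 1)) R := X.updateRow 0 x * shear (2 • Pi.single 0 1 - x)
    with hZ
  have hinv : shear (2 • Pi.single 0 1 - x) * shear x = 1 := by
    ext i j
    refine Fin.cases ?_ (fun i => ?_) i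
    · rw [Matrix.mul_apply, Fin.sum_univ_succ]
      simp only [shear, Matrix.updateRow_self]
      refine Fin.cases ?_ (fun j => ?_) j
      · simp [hx0]; ring
      · simp [hx0, Matrix.one_apply, (Fin.succ_ne_zero j).symm]; ring
    · rw [Matrix.mul_apply, Finset.sum_eq_single i.succ]
      · simp [shear]
      · intro b _ hb; simp [shear, Matrix.one_apply_ne hb.symm]
      · simp
  have hrow : Z 0 = Pi.single 0 1 := by
    ext j
    rw [hZ, Matrix.mul_apply, Fin.sum_univ_succ]
    simp only [shear, Matrix.updateRow_self]
    refine Fin.cases ?_ (fun j => ?_) j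
    · simp [hx0]; ring
    · simp [hx0, Matrix.one_apply]
  have h := holds_scale hm _ (u : R) _ (holds_mul_shear _ Z x hx0
    (holds_of_row_eq e₁ e₂ Z hrow (h₁ _) (h₂ _)))
  have hX : Z * shear x = X.updateRow 0 x := by
    rw [hZ, Matrix.mul_assoc, hinv, Matrix.mul_one]
  rw [hX, Matrix.updateRow_self, Matrix.updateRow_idem] at h
  convert h
  rw [hx, smul_smul, Units.mul_inv, one_smul, Matrix.updateRow_eq_self]

/-- Adding an indeterminate `T` to the leading coefficient of the first form makes it monic
in `T`, hence invertible in a ring containing `R[T]`; then `T` is set to `0`. -/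
lemma holds_step {m k d : ℕ} (hm : m = k + d) (e₁ : TakeIdx m d ≃ Mon (k + 1) d)
    (e₂ : TakeIdx m (d + 1) ≃ Mon k (d + 1))
    (h₁ : ∀ (R : Type u) [CommRing R] (X : Matrix (Fin m) (Fin (k + 1)) R), Holds e₁ X)
    (h₂ : ∀ (R : Type u) [CommRing R] (X : Matrix (Fin m) (Fin k) R), Holds e₂ X)
    (R : Type u) [CommRing R] (X : Matrix (Fin (m + 1)) (Fin (k + 1)) R) :
    Holds (stepEquiv e₁ e₂) X := by
  set p : Polynomial R := Polynomial.X + Polynomial.C (X 0 0) with hp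
  have hmonic : p.Monic := Polynomial.monic_X_add_C _
  let X' : Matrix (Fin (m + 1)) (Fin (k + 1)) (Polynomial R) :=
    Matrix.of fun i j => if i = 0 ∧ j = 0 then p else Polynomial.C (X i j)
  have hloc := holds_step_unit hm e₁ e₂ (h₁ _) (h₂ _)
    (X'.map (algebraMap (Polynomial R) (Localization.Away p)))
    (by simpa [X'] using IsLocalization.Away.algebraMap_isUnit p)
  rw [holds_map_iff] at hloc
  have hinj : Function.Injective (algebraMap (Polynomial R) (Localization.Away p)) :=
    IsLocalization.injective _ (Submonoid.powers_le.2 hmonic.mem_nonZeroDivisors)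
  have hX : X'.map (Polynomial.evalRingHom 0) = X := by
    ext i j
    by_cases h : i = 0 ∧ j = 0
    · simp [X', h, hp]
    · simp [X', h]
  have h := (holds_map_iff (Polynomial.evalRingHom 0) (stepEquiv e₁ e₂) X').2
    (congrArg _ (hinj hloc))
  rwa [hX] at h

theorem exists_equiv_holds (m k d : ℕ) (hm : m + 1 = k + d) :
    ∃ e : TakeIdx m d ≃ Mon k d,
      ∀ (R : Type u) [CommRing R] (X : Matrix (Fin m) (Fin k) R), Holds e X := by
  induction m using Nat.strong_induction_on generalizing k d with
  | _ m ih =>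
    have hempty : IsEmpty (TakeIdx m (m + 1)) :=
      Fintype.card_eq_zero_iff.1 (by rw [card_take, Nat.choose_succ_self])
    rcases k with _ | k
    · obtain rfl : d = m + 1 := by omega
      have : IsEmpty (Mon 0 (m + 1)) := ⟨fun f => by simpa using f.2⟩
      refine ⟨Equiv.equivOfIsEmpty _ _, fun R _ X => ?_⟩
      rw [Holds, Matrix.det_isEmpty, Finset.prod_eq_one fun t _ => Matrix.det_isEmpty]
    rcases d with _ | d
    · obtain rfl : k = m := by omega
      have : Unique (TakeIdx k 0) :=
        ⟨⟨⟨∅, rfl⟩⟩, fun s => Subtype.ext (Finset.card_eq_zero.1 s.2)⟩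
      have : Unique (Mon (k + 1) 0) :=
        ⟨⟨⟨0, by simp⟩⟩, fun f => Subtype.ext (funext fun i => by
          simpa using (Finset.sum_eq_zero_iff.1 f.2) i (Finset.mem_univ i))⟩
      refine ⟨Equiv.ofUnique _ _, fun R _ X => ?_⟩
      rw [Holds, Fintype.prod_empty, ← Matrix.det_one (n := TakeIdx k 0)]
      congr 1
      ext s s'
      obtain rfl := Subsingleton.elim s s'
      rw [Matrix.one_apply_eq, Matrix.of_apply, entry, Finset.card_eq_zero.1 s.2,
        Finset.prod_empty, MvPolynomial.coeff_one, if_pos]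
      ext i
      exact ((Finset.sum_eq_zero_iff.1 (Equiv.ofUnique _ _ s : Mon (k + 1) 0).2) i
        (Finset.mem_univ i)).symm
    · obtain ⟨m, rfl⟩ : ∃ m', m = m' + 1 := ⟨m - 1, by omega⟩
      obtain ⟨e₁, h₁⟩ := ih m (by omega) (k + 1) d (by omega)
      obtain ⟨e₂, h₂⟩ := ih m (by omega) k (d + 1) (by omega)
      exact ⟨stepEquiv e₁ e₂, holds_step (by omega) e₁ e₂ h₁ h₂⟩

end EtaDet

universe u

/-- **Corollary (dual form of the multivariate Vandermonde identity).**
For `n, d ≥ 1` there is a sign `ε ∈ {1, -1}`, depending only on `n` and `d`, such that for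
every commutative ring `R` and every `(n+d) × (n+1)` matrix `X` over `R`, the matrix
`η^d X` — with rows indexed by `d`-element subsets of rows (ordered lexicographically by
the rows taken) and columns indexed by degree-`d` monomials (in inverse lexicographic
order) — is square of order `C(n+d, n)`, and its determinant (computed via the unique
order isomorphism `e` matching the two index orders) equals `ε • μ' X`. -/
theorem eta_det (n d : ℕ) (hn : 1 ≤ n) (hd : 1 ≤ d) :
    ∃ ε : ℤ, (ε = 1 ∨ ε = -1) ∧
      Fintype.card (TakeIdx (n + d) d) = (n + d).choose n ∧
      Fintype.card (MonIdx n d) = (n + d).choose n ∧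
      ∀ (R : Type u) [CommRing R] (X : Matrix (Fin (n + d)) (Fin (n + 1)) R),
        ∀ e : TakeIdx (n + d) d ≃o MonIdx n d,
          Matrix.det (Matrix.of fun p q : MonIdx n d => eta X (e.symm p) q) = ε • mu' X := by
  obtain ⟨e', he'⟩ := EtaDet.exists_equiv_holds.{u} (n + d) (n + 1) d (by omega)
  change TakeIdx (n + d) d ≃ MonIdx n d at e'
  have hcard : Fintype.card (TakeIdx (n + d) d) = (n + d).choose n := by
    rw [EtaDet.card_take, Nat.choose_symm_add]
  have hmain : ∃ ε : ℤˣ, ∀ (R : Type u) [CommRing R]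
      (X : Matrix (Fin (n + d)) (Fin (n + 1)) R), ∀ e : TakeIdx (n + d) d ≃o MonIdx n d,
        Matrix.det (Matrix.of fun p q : MonIdx n d => eta X (e.symm p) q) = (ε : ℤ) • mu' X := by
    by_cases hne : Nonempty (TakeIdx (n + d) d ≃o MonIdx n d)
    · obtain ⟨e₀⟩ := hne
      -- the sign compares the order isomorphism with the matching built by Pascal's rule
      refine ⟨Equiv.Perm.sign (e'.trans e₀.symm.toEquiv), fun R _ X e => ?_⟩
      obtain rfl : e = e₀ := Subsingleton.elim _ _
      have hX : (Matrix.of fun s s' : TakeIdx (n + d) d =>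
          EtaDet.entry X s.1 (e' s').1).det = ∏ t, EtaDet.minor X t := he' R X
      have hperm := Matrix.det_permute (e'.trans e.symm.toEquiv)
        (Matrix.of fun s s' : TakeIdx (n + d) d => EtaDet.entry X s.1 (e' s').1)
      rw [hX, ← Matrix.det_submatrix_equiv_self e'.symm] at hperm
      rw [zsmul_eq_mul]
      refine Eq.trans ?_ hperm
      congr 1
      ext p q
      simp [eta, EtaDet.entry, EtaDet.lin]
    · exact ⟨1, fun R _ X e => (hne ⟨e⟩).elim⟩
  obtain ⟨ε, hε⟩ := hmain
  refine ⟨ε, ?_, hcard, ?_, hε⟩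
  · rcases Int.units_eq_one_or ε with rfl | rfl <;> simp
  · rw [← hcard, Fintype.card_congr e']
end

section
/- Let R be a commutative ring, m ≥ 1 and d ≥ 0, and let u be an m×m matrix over R. Consider the R-linear endomorphism S^d(u) of the (free, finite-rank) R-module of homogeneous polynomials of total degree d in m variables Y_0, …, Y_{m−1}, induced by the linear substitution Y_j ↦ u_{0j}·Y_0 + … + u_{(m−1)j}·Y_{m−1} (i.e. the d-th symmetric power of u acting on degree-d forms). Then det(S^d(u)) = (det u)^{C(m+d−1, m)}. -/
/-!
Both sides of the identity are integral polynomials in the entries of `u`: in the monomial basis the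
entries of the matrix of `S^d(u)` are coefficients of products of linear forms, hence commute with
ring homomorphisms (`det_symPow_map`). It therefore suffices to treat the generic matrix over
`ℤ[x_ij]`, and then its image over the fraction field `K`, which has characteristic zero.

Over `K` every matrix is a product of diagonal matrices and transvections, and both sides are
multiplicative. For a diagonal matrix `diag(D)` the monomials are eigenvectors, and each `D i` occurs
in the determinant with exponent the sum of the `i`-th exponents of all monomials of degree `d`,
which is `C(m+d-1, m)` by symmetry (`sum_exponent`). For a transvection `t(c)` the determinant
of `S^d(t(c))` is idempotent and nonzero, hence `1`, because `t(c)² = t(2c)` is conjugate to `t(c)`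
under a diagonal matrix (`det_symPow_transvection`).
-/

open MvPolynomial

/-- The `d`-th symmetric power `S^d(u)` of an `m × m` matrix `u` over `R`, realised as the
`R`-linear endomorphism of the module of homogeneous polynomials of total degree `d` in the
variables `Y 0, …, Y (m-1)` induced by the linear substitution
`Y j ↦ u 0 j • Y 0 + … + u (m-1) j • Y (m-1)`. -/
noncomputable def symPow {R : Type*} [CommRing R] (m d : ℕ) (u : Matrix (Fin m) (Fin m) R) :
    MvPolynomial.homogeneousSubmodule (Fin m) R d →ₗ[R]
      MvPolynomial.homogeneousSubmodule (Fin m) R d :=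
  (MvPolynomial.aeval fun j : Fin m =>
      ∑ i, MvPolynomial.C (u i j) * MvPolynomial.X i :
        MvPolynomial (Fin m) R →ₐ[R] MvPolynomial (Fin m) R).toLinearMap.restrict
    (fun x hx => by
      rw [MvPolynomial.mem_homogeneousSubmodule] at hx ⊢
      have h1 : ∀ j : Fin m,
          (∑ i, MvPolynomial.C (u i j) * MvPolynomial.X i :
            MvPolynomial (Fin m) R).IsHomogeneous 1 :=
        fun j => MvPolynomial.IsHomogeneous.sum _ _ _
          (fun i _ => by simpa using MvPolynomial.isHomogeneous_C_mul_X_pow (u i j) i 1)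
      simpa using hx.aeval _ h1)

/-- The exponent vectors of the monomials of total degree `d` in `m` variables. -/
abbrev DegExp (m d : ℕ) : Type :=
  {e : Fin m →₀ ℕ // e ∈ Finset.finsuppAntidiag (Finset.univ : Finset (Fin m)) d}

theorem DegExp.sum_eq {m d : ℕ} (e : DegExp m d) : ∑ i, e.1 i = d := by
  have h := e.2
  rw [Finset.mem_finsuppAntidiag] at h
  exact h.1

theorem mem_degExp_iff {m d : ℕ} (e : Fin m →₀ ℕ) :
    e ∈ Finset.finsuppAntidiag (Finset.univ : Finset (Fin m)) d ↔ e.degree = d := by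
  simp [Finset.mem_finsuppAntidiag, Finsupp.degree_eq_sum]

/-- The coordinate isomorphism sending a form of degree `d` to its family of coefficients. -/
noncomputable def coeffEquiv (R : Type*) [CommRing R] (m d : ℕ) :
    homogeneousSubmodule (Fin m) R d ≃ₗ[R] (DegExp m d → R) where
  toFun p e := coeff e.1 p.1
  map_add' p q := by ext; simp
  map_smul' c p := by ext; simp
  invFun f := ⟨∑ e : DegExp m d, monomial e.1 (f e), by
    refine Submodule.sum_mem _ fun e _ => ?_
    rw [mem_homogeneousSubmodule]
    exact isHomogeneous_monomial _ ((mem_degExp_iff _).1 e.2)⟩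
  left_inv p := by
    ext e
    simp only [coeff_sum, coeff_monomial]
    by_cases he : e.degree = d
    · rw [Finset.sum_eq_single ⟨e, (mem_degExp_iff e).2 he⟩]
      · simp
      · intro b _ hb
        rw [if_neg]
        rintro rfl
        exact hb rfl
      · simp
    · have hp := (mem_homogeneousSubmodule d p.1).1 p.2
      rw [hp.coeff_eq_zero he]
      refine Finset.sum_eq_zero fun b _ => if_neg ?_
      rintro rfl
      exact he ((mem_degExp_iff _).1 b.2)
  right_inv f := by
    ext e
    simp only [coeff_sum, coeff_monomial]
    rw [Finset.sum_eq_single e]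
    · simp
    · intro b _ hb
      exact if_neg fun h => hb (Subtype.ext h)
    · simp

/-- The basis of monomials of the module of forms of degree `d`. -/
noncomputable def monomialBasis (R : Type*) [CommRing R] (m d : ℕ) :
    Module.Basis (DegExp m d) R (homogeneousSubmodule (Fin m) R d) :=
  Module.Basis.ofEquivFun (coeffEquiv R m d)

theorem monomialBasis_coe {R : Type*} [CommRing R] {m d : ℕ} (e : DegExp m d) :
    (monomialBasis R m d e : MvPolynomial (Fin m) R) = monomial e.1 1 := by
  have : (monomialBasis R m d e : MvPolynomial (Fin m) R) =
      ∑ e' : DegExp m d, monomial e'.1 ((Pi.single e 1 : DegExp m d → R) e') := by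
    simp only [monomialBasis, Module.Basis.coe_ofEquivFun]
    rfl
  rw [this, Finset.sum_eq_single e]
  · simp
  · intro b _ hb
    simp [hb]
  · simp

/-- Entry `(e, f)` of the matrix of `S^d(u)` in the monomial basis. -/
theorem toMatrix_symPow_apply {R : Type*} [CommRing R] {m d : ℕ} (u : Matrix (Fin m) (Fin m) R)
    (e f : DegExp m d) :
    LinearMap.toMatrix (monomialBasis R m d) (monomialBasis R m d) (symPow m d u) e f =
      coeff e.1 (∏ j, (∑ i, C (u i j) * X i) ^ f.1 j) := by
  rw [LinearMap.toMatrix_apply]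
  change coeff e.1 (aeval _ (monomialBasis R m d f : MvPolynomial (Fin m) R)) = _
  rw [monomialBasis_coe, aeval_monomial, map_one, one_mul, Finsupp.prod_fintype _ _ (by simp)]

theorem det_symPow_map {R S : Type*} [CommRing R] [CommRing S] (φ : R →+* S) {m d : ℕ}
    (u : Matrix (Fin m) (Fin m) R) :
    LinearMap.det (symPow m d (u.map φ)) = φ (LinearMap.det (symPow m d u)) := by
  rw [← LinearMap.det_toMatrix (monomialBasis R m d), ← LinearMap.det_toMatrix (monomialBasis S m d),
    RingHom.map_det]
  congr 1
  ext e f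
  rw [RingHom.mapMatrix_apply, Matrix.map_apply, toMatrix_symPow_apply, toMatrix_symPow_apply,
    ← coeff_map]
  simp [map_prod, map_sum]

theorem symPow_mul {R : Type*} [CommRing R] {m d : ℕ} (u v : Matrix (Fin m) (Fin m) R) :
    symPow m d (u * v) = symPow m d u * symPow m d v := by
  have key : (aeval fun j : Fin m => ∑ i, C ((u * v) i j) * X i :
        MvPolynomial (Fin m) R →ₐ[R] MvPolynomial (Fin m) R) =
      (aeval fun j : Fin m => ∑ i, C (u i j) * X i).comp
        (aeval fun j : Fin m => ∑ i, C (v i j) * X i) := by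
    ext1 j
    simp only [aeval_X, AlgHom.comp_apply, map_sum, map_mul, Matrix.mul_apply, algHom_C,
      algebraMap_eq, Finset.sum_mul, Finset.mul_sum]
    rw [Finset.sum_comm]
    refine Finset.sum_congr rfl fun i _ => Finset.sum_congr rfl fun k _ => ?_
    ring
  ext1 p
  apply Subtype.ext
  exact DFunLike.congr_fun key p.1

theorem det_symPow_mul {R : Type*} [CommRing R] {m d : ℕ} (u v : Matrix (Fin m) (Fin m) R) :
    LinearMap.det (symPow m d (u * v)) =
      LinearMap.det (symPow m d u) * LinearMap.det (symPow m d v) := by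
  rw [symPow_mul, map_mul]

/-- The exponents of a fixed variable `Y_i`, summed over all monomials of degree `d`. By symmetry
this does not depend on `i`, and summing over `i` gives `d` times the number of monomials. -/
theorem sum_exponent {m d : ℕ} (hm : 1 ≤ m) (i : Fin m) :
    ∑ e : DegExp m d, e.1 i = (m + d - 1).choose m := by
  have hsymm : ∀ k : Fin m, ∑ e : DegExp m d, e.1 k = ∑ e : DegExp m d, e.1 i := by
    intro k
    let σ : DegExp m d ≃ DegExp m d :=
      (Finsupp.domCongr (Equiv.swap i k)).toEquiv.subtypeEquiv (fun a => by
        rw [mem_degExp_iff, mem_degExp_iff, Finsupp.degree_eq_sum, Finsupp.degree_eq_sum]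
        simp only [AddEquiv.toEquiv_eq_coe, EquivLike.coe_coe, Finsupp.domCongr_apply,
          Finsupp.equivMapDomain_apply]
        rw [Equiv.sum_comp (Equiv.swap i k).symm (fun x => a x)])
    rw [← Equiv.sum_comp σ]
    refine Finset.sum_congr rfl fun e _ => ?_
    simp [σ, Finsupp.equivMapDomain_apply]
  have hcard : Fintype.card (DegExp m d) = (m + d - 1).choose d := by
    rw [Fintype.card_coe, Finset.card_finsuppAntidiag_nat_eq_choose]
    simp
  have h1 : m * ∑ e : DegExp m d, e.1 i = (m + d - 1).choose d * d := by
    calc m * ∑ e : DegExp m d, e.1 i = ∑ k : Fin m, ∑ e : DegExp m d, e.1 k := by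
          rw [Finset.sum_congr rfl fun k _ => hsymm k]
          simp
      _ = ∑ e : DegExp m d, ∑ k : Fin m, e.1 k := Finset.sum_comm
      _ = _ := by
          rw [Finset.sum_congr rfl fun e _ => DegExp.sum_eq e, Finset.sum_const, Finset.card_univ,
            hcard, smul_eq_mul]
  obtain ⟨n, rfl⟩ : ∃ n, m = n + 1 := ⟨m - 1, by omega⟩
  have h2 := Nat.choose_succ_right_eq (n + d) n
  have h3 : (n + d).choose d = (n + d).choose n := by
    rw [Nat.choose_symm_add]
  have h4 : n + 1 + d - 1 = n + d := by omega
  rw [h4] at h1 ⊢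
  rw [h3] at h1
  rw [Nat.add_sub_cancel_left, ← h1, mul_comm] at h2
  exact (Nat.eq_of_mul_eq_mul_left (Nat.succ_pos n) h2).symm

theorem det_symPow_diagonal {R : Type*} [CommRing R] {m d : ℕ} (hm : 1 ≤ m) (D : Fin m → R) :
    LinearMap.det (symPow m d (Matrix.diagonal D)) =
      (Matrix.diagonal D).det ^ ((m + d - 1).choose m) := by
  have hmat : LinearMap.toMatrix (monomialBasis R m d) (monomialBasis R m d)
      (symPow m d (Matrix.diagonal D)) =
      Matrix.diagonal fun e : DegExp m d => ∏ j, D j ^ e.1 j := by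
    ext e f
    have hX : ∀ j : Fin m, (∑ i, C (Matrix.diagonal D i j) * X i : MvPolynomial (Fin m) R) =
        C (D j) * X j := by
      intro j
      rw [Finset.sum_eq_single j]
      · simp
      · intro b _ hb
        simp [Matrix.diagonal_apply_ne _ hb]
      · simp
    have hprod : (∏ j, (C (D j) * X j) ^ f.1 j : MvPolynomial (Fin m) R) =
        monomial f.1 (∏ j, D j ^ f.1 j) := by
      rw [monomial_eq, Finsupp.prod_fintype _ _ (by simp)]
      simp [mul_pow, Finset.prod_mul_distrib, map_prod]
    rw [toMatrix_symPow_apply]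
    simp only [hX]
    rw [hprod, coeff_monomial, Matrix.diagonal_apply]
    by_cases h : e = f
    · simp [h]
    · rw [if_neg h, if_neg fun h' => h (Subtype.ext h'.symm)]
  rw [← LinearMap.det_toMatrix (monomialBasis R m d), hmat, Matrix.det_diagonal,
    Matrix.det_diagonal, Finset.prod_comm, ← Finset.prod_pow]
  refine Finset.prod_congr rfl fun j _ => ?_
  rw [Finset.prod_pow_eq_pow_sum, sum_exponent hm]

/-- Conjugating the transvection `t(c)` by a diagonal matrix with entry `2` in place `i` yields
`t(2c) = t(c)²`, so its image `x` under the multiplicative map `det ∘ S^d` is a unit with `x² = x`. -/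
theorem det_symPow_transvection {K : Type*} [Field K] [CharZero K] {m d : ℕ} (hm : 1 ≤ m)
    {i j : Fin m} (hij : i ≠ j) (c : K) :
    LinearMap.det (symPow m d (Matrix.transvection i j c)) = 1 := by
  set x := LinearMap.det (symPow m d (Matrix.transvection i j c)) with hx
  let E : Fin m → K := Function.update 1 i 2
  have hE : LinearMap.det (symPow m d (Matrix.diagonal E)) ≠ 0 := by
    rw [det_symPow_diagonal hm, Matrix.det_diagonal]
    refine pow_ne_zero _ (Finset.prod_ne_zero_iff.2 fun k _ => ?_)
    by_cases hk : k = i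
    · subst hk; simp [E]
    · simp [E, hk]
  have hone : symPow m d (1 : Matrix (Fin m) (Fin m) K) = 1 := by
    have key : (aeval fun j : Fin m => ∑ i, C ((1 : Matrix (Fin m) (Fin m) K) i j) * X i :
        MvPolynomial (Fin m) K →ₐ[K] MvPolynomial (Fin m) K) = AlgHom.id K _ := by
      ext1 j
      simp [Matrix.one_apply, apply_ite C, ite_mul]
    ext1 p
    apply Subtype.ext
    exact DFunLike.congr_fun key p.1
  have hx0 : x ≠ 0 := by
    intro h0
    have := det_symPow_mul (d := d) (Matrix.transvection i j c) (Matrix.transvection i j (-c))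
    rw [Matrix.transvection_mul_transvection_same _ _ hij, add_neg_cancel, Matrix.transvection_zero,
      hone, ← hx, h0, zero_mul, map_one] at this
    exact one_ne_zero this
  have hconj : Matrix.diagonal E * Matrix.transvection i j c =
      Matrix.transvection i j c * Matrix.transvection i j c * Matrix.diagonal E := by
    rw [Matrix.transvection_mul_transvection_same _ _ hij]
    ext a b
    rw [Matrix.diagonal_mul, Matrix.mul_diagonal]
    simp only [Matrix.transvection, Matrix.add_apply, Matrix.one_apply, Matrix.single_apply]
    by_cases hab : a = b
    · subst hab
      have : ¬ (i = a ∧ j = a) := fun h => hij (h.1.trans h.2.symm)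
      simp [this]
    · by_cases h : i = a ∧ j = b
      · obtain ⟨rfl, rfl⟩ := h
        simp [E, hij, hij.symm, two_mul]
      · simp [h, hab]
  have h := congrArg (fun A => LinearMap.det (symPow m d A)) hconj
  simp only [det_symPow_mul, ← hx] at h
  have h' : x * LinearMap.det (symPow m d (Matrix.diagonal E)) * 1 =
      x * LinearMap.det (symPow m d (Matrix.diagonal E)) * x := by
    linear_combination h
  exact (mul_left_cancel₀ (mul_ne_zero hx0 hE) h').symm

theorem det_symPow_field {K : Type*} [Field K] [CharZero K] {m d : ℕ} (hm : 1 ≤ m)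
    (u : Matrix (Fin m) (Fin m) K) :
    LinearMap.det (symPow m d u) = u.det ^ ((m + d - 1).choose m) := by
  refine Matrix.diagonal_transvection_induction
    (fun u => LinearMap.det (symPow m d u) = u.det ^ ((m + d - 1).choose m)) u
    (fun D _ => det_symPow_diagonal hm D) (fun t => ?_) (fun A B hA hB => ?_)
  · rw [Matrix.TransvectionStruct.det, one_pow]
    exact det_symPow_transvection hm t.hij t.c
  · rw [det_symPow_mul, hA, hB, Matrix.det_mul, mul_pow]

set_option synthInstance.maxHeartbeats 1000000 in
set_option maxHeartbeats 1000000 in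
/-- **Determinant of a symmetric power** (final corollary of the paper).
For a commutative ring `R`, `m ≥ 1`, `d ≥ 0` and an `m × m` matrix `u` over `R`,
the determinant of the endomorphism `S^d(u)` of the module of degree-`d` homogeneous
polynomials in `m` variables equals `(det u) ^ C(m+d-1, m)`. -/
theorem det_symPow {R : Type*} [CommRing R] (m d : ℕ) (hm : 1 ≤ m)
    (u : Matrix (Fin m) (Fin m) R) :
    LinearMap.det (symPow m d u) = u.det ^ ((m + d - 1).choose m) := by
  let A := MvPolynomial (Fin m × Fin m) ℤ
  let U : Matrix (Fin m) (Fin m) A := Matrix.mvPolynomialX (Fin m) (Fin m) ℤ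
  have hU : LinearMap.det (symPow m d U) = U.det ^ ((m + d - 1).choose m) := by
    let ι : A →+* FractionRing A := algebraMap A (FractionRing A)
    have hinj : Function.Injective ι := IsFractionRing.injective A (FractionRing A)
    have : CharZero (FractionRing A) := charZero_of_injective_ringHom hinj
    apply hinj
    rw [← det_symPow_map, det_symPow_field hm, map_pow, RingHom.map_det, RingHom.mapMatrix_apply]
  let φ : A →+* R := eval₂Hom (Int.castRingHom R) fun p : Fin m × Fin m => u p.1 p.2
  have hu : U.map φ = u := Matrix.mvPolynomialX_map_eval₂ (Int.castRingHom R) u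
  rw [← hu, det_symPow_map, hU, map_pow, RingHom.map_det, RingHom.mapMatrix_apply]
end
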